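/- arXiv:1601.06118 — 4 statements merged into one kernel-verified Lean document; each statement's English description precedes it below -/
import Mathlib

section
/- Let A : ℝ → ℂ^{d×d} be real analytic and 1-periodic and let α ∈ ℝ be such that L_{k+1}(α,A) = −∞ and L_k(α,A) > −∞ for some 1 ≤ k < d. Then there exists a real analytic 1-periodic map U : ℝ → U(d) into the unitary group such that B(x) := U(x+α)^{−1} A(x) U(x) has the 2×2 block form B(x) = [[a(x), b(x)], [0, d(x)]], where a(x) is an upper triangular (d−k)×(d−k) matrix with zeros on and below the diagonal (so the cocycle (α,a) is nilpotent) and d(x) is a k×k matrix that is invertible for all but finitely many x in a period. In particular, rank A_{d−k}(x) ≤ k for all x. -/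
open MeasureTheory Filter Topology

/-- Iterates of the one-frequency cocycle: `A_n(x) = A(x+(n-1)α) ⋯ A(x+α) A(x)`. -/
noncomputable def matIter {d : ℕ} (α : ℝ) (A : ℝ → Matrix (Fin d) (Fin d) ℂ) :
    ℕ → ℝ → Matrix (Fin d) (Fin d) ℂ
  | 0, _ => 1
  | n + 1, x => matIter α A n (x + α) * A x

/-- The `k`-th largest singular value of a matrix, `1 ≤ k ≤ d`, via the
Courant–Fischer max–min characterization:
`σ_k(M) = max {t | ∃ V of dim k, ∀ v ∈ V, t‖v‖ ≤ ‖Mv‖}`. -/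
noncomputable def singVal {d : ℕ} (k : ℕ) (M : Matrix (Fin d) (Fin d) ℂ) : ℝ :=
  sSup {t : ℝ | ∃ V : Submodule ℂ (EuclideanSpace ℂ (Fin d)),
    Module.finrank ℂ V = k ∧ ∀ v ∈ V, t * ‖v‖ ≤ ‖(Matrix.toEuclideanLin M) v‖}

/-- The integral `∫ ln(g) dμ`, valued in `[-∞,∞]` (here `ln 0 = -∞`); by convention it is `-∞`
whenever the negative part of `ln g` is not `μ`-integrable. -/
noncomputable def elogIntegral {X : Type*} [MeasurableSpace X] (μ : Measure X) (g : X → ℝ) :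
    EReal :=
  if μ {x | g x = 0} = 0 ∧ (∫⁻ x, ENNReal.ofReal (-Real.log (g x)) ∂μ) ≠ ⊤ then
    (∫⁻ x, ENNReal.ofReal (Real.log (g x)) ∂μ).toEReal
      - (∫⁻ x, ENNReal.ofReal (-Real.log (g x)) ∂μ).toEReal
  else ⊥

/-- `L_k(α, A) = L`: the `k`-th Lyapunov exponent of the one-frequency cocycle `(α, A)`
is `L ∈ [-∞,∞)`, i.e. `L = lim_n (1/n) ∫₀¹ ln σ_k(A_n(x)) dx`. -/
def HasLyapunovExp {d : ℕ} (α : ℝ) (A : ℝ → Matrix (Fin d) (Fin d) ℂ) (k : ℕ) (L : EReal) :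
    Prop :=
  Tendsto (fun n : ℕ => (((n : ℝ)⁻¹ : ℝ) : EReal)
      * elogIntegral (volume.restrict (Set.Ioc (0:ℝ) 1))
          (fun x => singVal k (matIter α A n x)))
    atTop (𝓝 L)

/-- A real analytic, 1-periodic matrix valued map. -/
def AnalyticPeriodicMat {d e : ℕ} (A : ℝ → Matrix (Fin d) (Fin e) ℂ) : Prop :=
  Function.Periodic A 1 ∧ ∀ (x : ℝ) (i : Fin d) (j : Fin e), AnalyticAt ℝ (fun t => A t i j) x

/-!
The real analytic 1-periodic functions form an integral domain in which every nonzero vector is a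
scalar times a unit vector: its finitely many zeros per period are divided out by the periodic
factors `exp (2πi (x - z)) - 1`, and the resulting nowhere vanishing vector is normalized. Hence,
whenever `det A ≡ 0`, there is an analytic unit vector in the kernel of `A(x)`. Completed to a
unitary frame `U`, it makes the first column of `U(x + α)* A(x) U(x)` vanish. Repeating this with
the remaining minor ends with a trailing block `D` whose determinant does not vanish identically.

The size `k` of `D` is read off from the exponents. The nilpotent corner forces
`rank A_n(x) ≤ k` for `n ≥ d - k`, so `L_κ = -∞` for `κ > k`. For `κ ≤ k`, the adjugate gives
`‖D(x) v‖ ≥ c |det D(x)| ‖v‖`, whence `L_κ ≥ ∫ log (c |det D|)`, which is finite because the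
logarithm of a nonzero analytic function is locally integrable.
-/

section BlockMatrices

open Matrix

variable {R : Type*} [CommRing R] [StarRing R] {d : ℕ}

/-- The first `m` columns of `M` vanish on and below the diagonal: the leading `m × m` block is
strictly upper triangular and the block below it is zero. -/
def HasNilpotentCorner {S : Type*} [Zero S] (m : ℕ) (M : Matrix (Fin d) (Fin d) S) : Prop :=
  ∀ i j : Fin d, (j : ℕ) < m → (j : ℕ) ≤ i → M i j = 0

/-- The inclusion of the last `k` indices. -/
def lastFin {k : ℕ} (hk : k ≤ d) (i : Fin k) : Fin d :=
  ⟨d - k + i, by omega⟩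

theorem lastFin_injective {k : ℕ} (hk : k ≤ d) : Function.Injective (lastFin hk) :=
  fun i j hij => by simpa [lastFin, Fin.ext_iff] using hij

theorem le_val_lastFin {k : ℕ} (hk : k ≤ d) (i : Fin k) : d - k ≤ (lastFin hk i : ℕ) :=
  Nat.le_add_right ..

theorem val_lt_of_notMem_range_lastFin {k : ℕ} {hk : k ≤ d} {i : Fin d}
    (hi : i ∉ Set.range (lastFin hk)) : (i : ℕ) < d - k := by
  by_contra! h
  exact hi ⟨⟨i - (d - k), by omega⟩, Fin.ext (by simp [lastFin, h])⟩

/-- The trailing `k × k` block of a square matrix. -/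
def bottomRight {S : Type*} {k : ℕ} (hk : k ≤ d) (M : Matrix (Fin d) (Fin d) S) :
    Matrix (Fin k) (Fin k) S :=
  M.submatrix (lastFin hk) (lastFin hk)

theorem bottomRight_mul {S : Type*} [NonUnitalNonAssocSemiring S] {k : ℕ} {hk : k ≤ d}
    {M : Matrix (Fin d) (Fin d) S} (hM : ∀ i j : Fin d, d - k ≤ i → (j : ℕ) < d - k → M i j = 0)
    (N : Matrix (Fin d) (Fin d) S) :
    bottomRight hk (M * N) = bottomRight hk M * bottomRight hk N := by
  ext i j
  refine (Fintype.sum_of_injective (lastFin hk) (lastFin_injective hk) _ _ (fun l hl => ?_)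
    fun l => rfl).symm
  have h0 : M (lastFin hk i) l = 0 :=
    hM _ _ (le_val_lastFin hk i) (val_lt_of_notMem_range_lastFin hl)
  exact mul_eq_zero_of_left h0 _

theorem rank_le_of_cols_eq_zero {K : Type*} [Field K] {k : ℕ} (hk : k ≤ d)
    {M : Matrix (Fin d) (Fin d) K} (hM : ∀ i j : Fin d, (j : ℕ) < d - k → M i j = 0) :
    M.rank ≤ k := by
  have hspan : Set.range M.col ⊆ Submodule.span K (Set.range (M.col ∘ lastFin hk)) := by
    rintro _ ⟨j, rfl⟩
    by_cases hj : j ∈ Set.range (lastFin hk)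
    · obtain ⟨l, rfl⟩ := hj
      exact Submodule.subset_span ⟨l, rfl⟩
    · have h0 : M.col j = 0 := funext fun i => hM i j (val_lt_of_notMem_range_lastFin hj)
      exact h0 ▸ zero_mem _
  calc M.rank = Module.finrank K (Submodule.span K (Set.range M.col)) :=
        M.rank_eq_finrank_span_cols
    _ ≤ Module.finrank K (Submodule.span K (Set.range (M.col ∘ lastFin hk))) :=
        Submodule.finrank_mono (Submodule.span_le.2 hspan)
    _ ≤ k := (finrank_range_le_card _).trans_eq (Fintype.card_fin k)

/-- The block diagonal matrix `1 ⊕ M`. -/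
def border {S : Type*} [Zero S] [One S] (M : Matrix (Fin d) (Fin d) S) :
    Matrix (Fin (d + 1)) (Fin (d + 1)) S :=
  Matrix.of <| Fin.cons (Pi.single 0 1) fun i => Fin.cons 0 (M i)

@[simp]
theorem border_zero_zero {S : Type*} [Zero S] [One S] (M : Matrix (Fin d) (Fin d) S) :
    border M 0 0 = 1 := rfl

@[simp]
theorem border_zero_succ {S : Type*} [Zero S] [One S] (M : Matrix (Fin d) (Fin d) S) (j : Fin d) :
    border M 0 j.succ = 0 := rfl

@[simp]
theorem border_succ_zero {S : Type*} [Zero S] [One S] (M : Matrix (Fin d) (Fin d) S) (i : Fin d) :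
    border M i.succ 0 = 0 := rfl

@[simp]
theorem border_succ_succ {S : Type*} [Zero S] [One S] (M : Matrix (Fin d) (Fin d) S)
    (i j : Fin d) : border M i.succ j.succ = M i j := rfl

theorem border_map {S T : Type*} [NonAssocSemiring S] [NonAssocSemiring T] (f : S →+* T)
    (M : Matrix (Fin d) (Fin d) S) : (border M).map f = border (M.map f) := by
  ext i j
  refine Fin.cases ?_ (fun i => ?_) i <;> refine Fin.cases ?_ (fun j => ?_) j <;> simp

theorem col_zero_mul_border {S : Type*} [NonAssocSemiring S]
    (C : Matrix (Fin (d + 1)) (Fin (d + 1)) S) (W : Matrix (Fin d) (Fin d) S) :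
    (C * border W).col 0 = C.col 0 := by
  ext i
  simp [mul_apply, Fin.sum_univ_succ]

theorem HasNilpotentCorner.of_submatrix_succ {S : Type*} [Zero S] {m : ℕ}
    {M : Matrix (Fin (d + 1)) (Fin (d + 1)) S} (h0 : M.col 0 = 0)
    (h : HasNilpotentCorner m (M.submatrix Fin.succ Fin.succ)) : HasNilpotentCorner (m + 1) M := by
  intro i j
  refine Fin.cases (fun _ _ => congrFun h0 i) (fun j => ?_) j
  refine Fin.cases (fun _ hij => ?_) (fun i hj hij => ?_) i
  · simp at hij
  · exact h i j (by simpa using hj) (by simpa using hij)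

theorem bottomRight_submatrix_succ {S : Type*} {k : ℕ} (hk : k ≤ d)
    (M : Matrix (Fin (d + 1)) (Fin (d + 1)) S) :
    bottomRight hk (M.submatrix Fin.succ Fin.succ) = bottomRight (hk.trans d.le_succ) M := by
  ext i j
  simp [bottomRight, lastFin, Nat.sub_add_comm hk, Nat.add_right_comm]

theorem border_conjTranspose_mul_mul_border_submatrix_succ (V W : Matrix (Fin d) (Fin d) R)
    (C : Matrix (Fin (d + 1)) (Fin (d + 1)) R) :
    ((border V)ᴴ * C * border W).submatrix Fin.succ Fin.succ =
      Vᴴ * C.submatrix Fin.succ Fin.succ * W := by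
  ext i j
  simp [mul_apply, Fin.sum_univ_succ]

theorem border_mem_unitaryGroup {U : Matrix (Fin d) (Fin d) R} (hU : U ∈ unitaryGroup (Fin d) R) :
    border U ∈ unitaryGroup (Fin (d + 1)) R := by
  rw [mem_unitaryGroup_iff', star_eq_conjTranspose] at hU ⊢
  ext i j
  refine Fin.cases ?_ (fun i => ?_) i <;> refine Fin.cases ?_ (fun j => ?_) j
  case refine_2.refine_2 =>
    have hij := congrFun₂ hU i j
    simpa [mul_apply, Fin.sum_univ_succ, one_apply] using hij
  all_goals simp [mul_apply, Fin.sum_univ_succ, one_apply, Fin.succ_ne_zero,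
    (Fin.succ_ne_zero _).symm]

end BlockMatrices

section UnitaryTriangularization

open Matrix

variable {R : Type*} [CommRing R] [StarRing R] {d : ℕ}

/-- Every nonzero vector over the star ring `R` is a scalar multiple of a unit vector. This is the
property of the ring of analytic periodic functions on which unitary triangularization rests. -/
def HasUnitDirections (R : Type*) [CommRing R] [StarRing R] : Prop :=
  ∀ ⦃n : ℕ⦄ (v : Fin n → R), v ≠ 0 → ∃ (c : R) (w : Fin n → R), star w ⬝ᵥ w = 1 ∧ v = c • w

theorem HasUnitDirections.exists_unit_mulVec_eq_zero [IsDomain R] (hR : HasUnitDirections R)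
    {M : Matrix (Fin d) (Fin d) R} (hM : M.det = 0) :
    ∃ w : Fin d → R, star w ⬝ᵥ w = 1 ∧ M *ᵥ w = 0 := by
  obtain ⟨v, hv, hMv⟩ := exists_mulVec_eq_zero_iff.2 hM
  obtain ⟨c, w, hw, rfl⟩ := hR v hv
  have hc : c ≠ 0 := by
    rintro rfl
    exact hv (zero_smul R w)
  rw [mulVec_smul] at hMv
  exact ⟨w, hw, (smul_eq_zero.1 hMv).resolve_left hc⟩

theorem conjTranspose_mul_self_updateCol {n : Type*} [Fintype n] [DecidableEq n]
    {W : Matrix n n R} {s : Finset n} {j : n} {c : n → R}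
    (hW : Wᴴ * W = diagonal fun i => if i ∈ s then 1 else 0) (hj : j ∉ s)
    (hcc : star c ⬝ᵥ c = 1) (hWc : Wᴴ *ᵥ c = 0) :
    (W.updateCol j c)ᴴ * W.updateCol j c = diagonal fun i => if i ∈ insert j s then 1 else 0 := by
  have hcW : star c ᵥ* W = 0 := by
    simpa only [star_mulVec, conjTranspose_conjTranspose, star_zero] using congrArg star hWc
  have hself : (W.updateCol j c).col j = c := by ext; simp
  have hne {a : n} (ha : a ≠ j) : (W.updateCol j c).col a = W.col a := by ext; simp [ha]
  ext a b
  change star ((W.updateCol j c).col a) ⬝ᵥ (W.updateCol j c).col b = _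
  rcases eq_or_ne a j with rfl | ha <;> rcases eq_or_ne b a with rfl | hb
  · simpa [hself] using hcc
  · rw [hself, hne hb, diagonal_apply_ne' _ hb]
    exact congrFun hcW b
  · rw [hne ha]
    refine (congrFun₂ hW b b).trans ?_
    simp [ha]
  · rw [hne ha, diagonal_apply_ne' _ hb]
    rcases eq_or_ne b j with rfl | hbj
    · rw [hself]
      exact congrFun hWc a
    · rw [hne hbj]
      exact (congrFun₂ hW a b).trans (diagonal_apply_ne' _ hb)

theorem HasUnitDirections.exists_mem_unitaryGroup_col_eq [IsDomain R] (hR : HasUnitDirections R)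
    (i₀ : Fin d) {w : Fin d → R} (hw : star w ⬝ᵥ w = 1) :
    ∃ U ∈ unitaryGroup (Fin d) R, U.col i₀ = w := by
  suffices H : ∀ s : Finset (Fin d), ∃ W : Matrix (Fin d) (Fin d) R, W.col i₀ = w ∧
      Wᴴ * W = diagonal fun i => if i ∈ insert i₀ s then 1 else 0 by
    obtain ⟨U, hcol, hU⟩ := H Finset.univ
    refine ⟨U, mem_unitaryGroup_iff'.2 ?_, hcol⟩
    simpa only [Finset.mem_insert, Finset.mem_univ, or_true, if_true, diagonal_one,
      star_eq_conjTranspose] using hU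
  intro s
  induction s using Finset.induction_on with
  | empty =>
    refine ⟨(0 : Matrix (Fin d) (Fin d) R).updateCol i₀ w, by ext; simp, ?_⟩
    exact conjTranspose_mul_self_updateCol (s := ∅) (by simp) (by simp) hw (by simp)
  | insert j s _ ih =>
    obtain ⟨W, hcol, hW⟩ := ih
    by_cases hj : j ∈ insert i₀ s
    · exact ⟨W, hcol, by rwa [Finset.insert_comm, Finset.insert_eq_of_mem hj]⟩
    have hdet : Wᴴ.det * W.det = 0 := by
      rw [← det_mul, hW, det_diagonal]
      exact Finset.prod_eq_zero (Finset.mem_univ j) (if_neg hj)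
    have hdet' : Wᴴ.det = 0 := by simpa [det_conjTranspose] using hdet
    obtain ⟨c, hc, hWc⟩ := hR.exists_unit_mulVec_eq_zero hdet'
    have hji : i₀ ≠ j := fun h => hj (h ▸ Finset.mem_insert_self _ _)
    refine ⟨W.updateCol j c, ?_, ?_⟩
    · rw [← hcol]
      ext i
      simp [hji]
    · rw [Finset.insert_comm]
      exact conjTranspose_mul_self_updateCol hW hj hc hWc

theorem HasUnitDirections.exists_unitary_col_zero_eq_zero [IsDomain R] (hR : HasUnitDirections R)
    (τ : R →+* R) {A : Matrix (Fin (d + 1)) (Fin (d + 1)) R} (hA : A.det = 0) :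
    ∃ V ∈ unitaryGroup (Fin (d + 1)) R, ((V.map τ)ᴴ * A * V).col 0 = 0 := by
  obtain ⟨w, hw, hAw⟩ := hR.exists_unit_mulVec_eq_zero hA
  obtain ⟨V, hV, hVw⟩ := hR.exists_mem_unitaryGroup_col_eq 0 hw
  refine ⟨V, hV, ?_⟩
  rw [← mulVec_single_one, ← mulVec_mulVec, ← mulVec_mulVec, mulVec_single_one, hVw, hAw,
    mulVec_zero]

/-- Peel off one unit kernel vector at a time: completed to a unitary frame it clears the first
column, and the remaining minor is treated in the same way until its determinant is nonzero. -/
theorem HasUnitDirections.exists_unitary_blockForm [IsDomain R] (hR : HasUnitDirections R)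
    (τ : R →+* R) (A : Matrix (Fin d) (Fin d) R) :
    ∃ U ∈ unitaryGroup (Fin d) R, ∃ (k : ℕ) (hk : k ≤ d),
      HasNilpotentCorner (d - k) ((U.map τ)ᴴ * A * U) ∧
      (bottomRight hk ((U.map τ)ᴴ * A * U)).det ≠ 0 := by
  induction d with
  | zero => exact ⟨1, one_mem _, 0, le_rfl, fun i => i.elim0, by simp⟩
  | succ d ih =>
    by_cases hA : A.det = 0
    · obtain ⟨V, hV, hV0⟩ := hR.exists_unitary_col_zero_eq_zero τ hA
      set C := (V.map τ)ᴴ * A * V with hC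
      obtain ⟨U, hU, k, hk, hcorner, hdet⟩ := ih (C.submatrix Fin.succ Fin.succ)
      rw [← border_conjTranspose_mul_mul_border_submatrix_succ] at hcorner hdet
      have hB : ((V * border U).map τ)ᴴ * A * (V * border U) =
          (border (U.map τ))ᴴ * C * border U := by
        rw [Matrix.map_mul, border_map, conjTranspose_mul, hC]
        simp only [Matrix.mul_assoc]
      have hB0 : ((border (U.map τ))ᴴ * C * border U).col 0 = 0 := by
        rw [col_zero_mul_border, ← mulVec_single_one, ← mulVec_mulVec, mulVec_single_one, hV0,
          mulVec_zero]
      refine ⟨V * border U, mul_mem hV (border_mem_unitaryGroup hU), k, hk.trans d.le_succ, ?_⟩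
      rw [hB, Nat.sub_add_comm hk]
      exact ⟨.of_submatrix_succ hB0 hcorner, by rwa [← bottomRight_submatrix_succ hk]⟩
    · refine ⟨1, one_mem _, d + 1, le_rfl, fun i j hj => by simp at hj, ?_⟩
      have hfull : bottomRight le_rfl A = A := by
        ext i j
        simp [bottomRight, lastFin]
      simpa [hfull] using hA

end UnitaryTriangularization

section AnalyticFunctions

variable {E F : Type*} [NormedAddCommGroup E] [NormedSpace ℝ E] [NormedAddCommGroup F]
  [NormedSpace ℂ F]

/-- A real analytic, 1-periodic function. -/
structure AnalyticPeriodic (f : ℝ → E) : Prop where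
  analyticAt (x : ℝ) : AnalyticAt ℝ f x
  periodic : Function.Periodic f 1

theorem analyticAt_add_int_of_periodic {f : ℝ → E} {z : ℝ}
    (hf : Function.Periodic f 1) (hz : AnalyticAt ℝ f z) (m : ℤ) : AnalyticAt ℝ f (z + m) := by
  have hshift : (fun x => f (x - m)) = f := funext fun x => by
    simpa using hf.sub_zsmul_eq m
  rw [← hshift]
  exact hz.fun_comp_of_eq (g := f) (analyticAt_id.sub analyticAt_const) (by simp)

namespace AnalyticPeriodic

theorem const (e : E) : AnalyticPeriodic fun _ => e :=
  ⟨fun _ => analyticAt_const, fun _ => rfl⟩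

theorem continuous {f : ℝ → E} (hf : AnalyticPeriodic f) : Continuous f :=
  continuous_iff_continuousAt.2 fun x => (hf.analyticAt x).continuousAt

theorem comp_add_right {f : ℝ → E} (hf : AnalyticPeriodic f) (α : ℝ) :
    AnalyticPeriodic fun x => f (x + α) :=
  ⟨fun x => (hf.analyticAt (x + α)).fun_comp_of_eq (g := f)
      (analyticAt_id.add analyticAt_const) rfl,
    fun x => by rw [add_right_comm, hf.periodic]⟩

theorem comp {G : Type*} [NormedAddCommGroup G] [NormedSpace ℝ G] {f : ℝ → E} {g : E → G}
    (hf : AnalyticPeriodic f) (hg : ∀ x, AnalyticAt ℝ g (f x)) : AnalyticPeriodic (g ∘ f) :=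
  ⟨fun x => (hg x).comp (hf.analyticAt x), hf.periodic.comp g⟩

theorem smul {c : ℝ → ℂ} {f : ℝ → F} (hc : AnalyticPeriodic c) (hf : AnalyticPeriodic f) :
    AnalyticPeriodic (c • f) :=
  ⟨fun x => (hc.analyticAt x).smul (hf.analyticAt x),
    fun x => by simp [hc.periodic x, hf.periodic x]⟩

theorem not_eventually_eq_zero {f : ℝ → E} (hf : AnalyticPeriodic f) (h0 : f ≠ 0) (z : ℝ) :
    ¬ ∀ᶠ x in 𝓝 z, f x = 0 := by
  intro h
  exact h0 <| AnalyticOnNhd.eq_of_eventuallyEq (fun x _ => hf.analyticAt x)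
    (fun _ _ => analyticAt_const) h

theorem finite_zeros {f : ℝ → E} (hf : AnalyticPeriodic f) (h0 : f ≠ 0) :
    {x ∈ Set.Icc (0 : ℝ) 1 | f x = 0}.Finite := by
  by_contra hinf
  obtain ⟨z, -, hz⟩ := Set.Infinite.exists_accPt_of_subset_isCompact hinf isCompact_Icc
    (Set.sep_subset _ _)
  refine h0 (funext fun x => ?_)
  refine AnalyticOnNhd.eqOn_zero_of_preconnected_of_frequently_eq_zero
    (fun x _ => hf.analyticAt x) isPreconnected_univ (Set.mem_univ z) ?_ (Set.mem_univ x)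
  exact (accPt_iff_frequently_nhdsNE.1 hz).mono fun y hy => hy.2

theorem exists_eq_smul_of_eventuallyEq {c : ℝ → ℂ} {v g : ℝ → F} {z : ℝ}
    (hc : AnalyticPeriodic c) (hv : AnalyticPeriodic v)
    (hc0 : ∀ x, c x = 0 → ∃ m : ℤ, x = z + m) (hg : AnalyticAt ℝ g z) (hvg : v =ᶠ[𝓝 z] c • g) :
    ∃ w, AnalyticPeriodic w ∧ w z = g z ∧ v = c • w := by
  classical
  set w : ℝ → F := fun x => if c x = 0 then g z else (c x)⁻¹ • v x with hw
  have hw_per : Function.Periodic w 1 := fun x => by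
    simp only [hw, hc.periodic x, hv.periodic x]
  have hw_eq : w =ᶠ[𝓝 z] g := by
    filter_upwards [hvg, Metric.ball_mem_nhds z one_pos] with x hx hxz
    by_cases hcx : c x = 0
    · obtain ⟨m, rfl⟩ := hc0 x hcx
      have hm : |m| < 1 := by
        rw [Metric.mem_ball, Real.dist_eq, add_sub_cancel_left] at hxz
        exact_mod_cast hxz
      obtain rfl : m = 0 := Int.abs_lt_one_iff.1 hm
      simp_all
    · simp [hw, hcx, hx]
  have hw_an : ∀ x, AnalyticAt ℝ w x := by
    intro x
    by_cases hcx : c x = 0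
    · obtain ⟨m, rfl⟩ := hc0 x hcx
      exact analyticAt_add_int_of_periodic hw_per (hg.congr hw_eq.symm) m
    · refine (((hc.analyticAt x).inv hcx).smul (hv.analyticAt x)).congr ?_
      filter_upwards [hc.continuous.continuousAt.eventually_ne hcx] with y hy
      simp [hw, hy]
  refine ⟨w, ⟨hw_an, hw_per⟩, hw_eq.eq_of_nhds, funext fun x => ?_⟩
  by_cases hcx : c x = 0
  · obtain ⟨m, rfl⟩ := hc0 x hcx
    have hcm : c (z + m) = c z := by simpa using hc.periodic.zsmul m z
    have hvm : v (z + m) = v z := by simpa using hv.periodic.zsmul m z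
    have hcz : c z = 0 := hcm ▸ hcx
    simpa [hcx, hvm, hcz] using hvg.eq_of_nhds
  · simp [hw, hcx]

end AnalyticPeriodic

/-- The 1-periodic entire function `x ↦ exp (2πi (x - z)) - 1`, with simple zeros exactly at
`z + ℤ`; dividing by it removes a zero of a periodic function without losing periodicity. -/
noncomputable def circleFactor (z x : ℝ) : ℂ :=
  Complex.exp (2 * Real.pi * Complex.I * (x - z : ℝ)) - 1

theorem analyticPeriodic_circleFactor (z : ℝ) : AnalyticPeriodic (circleFactor z) := by
  refine ⟨fun x => ?_, fun x => ?_⟩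
  · have hlin : AnalyticAt ℝ (fun x : ℝ => ((x - z : ℝ) : ℂ)) x :=
      (Complex.ofRealCLM.analyticAt _).fun_comp (analyticAt_id.sub analyticAt_const)
    have hexp : AnalyticAt ℝ Complex.exp (2 * Real.pi * Complex.I * ((x - z : ℝ) : ℂ)) :=
      analyticAt_cexp.restrictScalars
    exact (hexp.fun_comp_of_eq (analyticAt_const.mul hlin) rfl).sub analyticAt_const
  · simp only [circleFactor, sub_left_inj]
    rw [Complex.exp_eq_exp_iff_exists_int]
    exact ⟨1, by push_cast; ring⟩

theorem circleFactor_eq_zero_iff {z x : ℝ} : circleFactor z x = 0 ↔ ∃ m : ℤ, x = z + m := by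
  rw [circleFactor, sub_eq_zero, Complex.exp_eq_one_iff]
  refine exists_congr fun m => ?_
  rw [mul_comm (m : ℂ), mul_right_inj' Complex.two_pi_I_ne_zero, ← Complex.ofReal_intCast,
    Complex.ofReal_inj, sub_eq_iff_eq_add']

theorem deriv_circleFactor_self (z : ℝ) :
    deriv (circleFactor z) z = 2 * Real.pi * Complex.I := by
  have hlin : HasDerivAt (fun x : ℝ => 2 * Real.pi * Complex.I * ((x - z : ℝ) : ℂ))
      (2 * Real.pi * Complex.I * ((1 : ℝ) : ℂ)) z :=
    (((hasDerivAt_id z).sub_const z).ofReal_comp).const_mul _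
  exact (hlin.cexp.sub_const 1).deriv.trans (by simp)

theorem AnalyticPeriodic.exists_eq_smul_apply_ne_zero {v : ℝ → F} (hv : AnalyticPeriodic v)
    (h0 : v ≠ 0) (z : ℝ) :
    ∃ (c : ℝ → ℂ) (w : ℝ → F), AnalyticPeriodic c ∧ AnalyticPeriodic w ∧ v = c • w ∧ w z ≠ 0 := by
  obtain ⟨n, g, hg, hgz, hvg⟩ :=
    (hv.analyticAt z).exists_eventuallyEq_pow_smul_nonzero_iff.2 (hv.not_eventually_eq_zero h0 z)
  have hθ := analyticPeriodic_circleFactor z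
  set q := dslope (circleFactor z) z with hq
  have hq_an : AnalyticAt ℝ q z := by
    obtain ⟨p, hp⟩ := hθ.analyticAt z
    exact ⟨_, hp.has_fpower_series_dslope_fslope⟩
  have hqz : q z ≠ 0 := by
    simp [hq, dslope_same, deriv_circleFactor_self]
  have hθq (x : ℝ) : circleFactor z x = (x - z) • q x := by
    have hz : circleFactor z z = 0 := circleFactor_eq_zero_iff.2 ⟨0, by simp⟩
    rw [hq, sub_smul_dslope, hz, sub_zero]
  have hc : AnalyticPeriodic (circleFactor z ^ n) :=
    ⟨fun x => (hθ.analyticAt x).pow n, fun x => by simp [hθ.periodic x]⟩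
  have hfac : v =ᶠ[𝓝 z] (circleFactor z ^ n) • fun x => (q x ^ n)⁻¹ • g x := by
    filter_upwards [hvg, hq_an.continuousAt.eventually_ne hqz] with x hx hqx
    rw [hx, Pi.smul_apply', Pi.pow_apply, hθq, smul_pow, smul_assoc,
      smul_inv_smul₀ (pow_ne_zero n hqx)]
  obtain ⟨w, hw, hwz, hvw⟩ := hc.exists_eq_smul_of_eventuallyEq hv
    (fun x hx => circleFactor_eq_zero_iff.1 (eq_zero_of_pow_eq_zero hx))
    (((hq_an.pow n).inv (pow_ne_zero n hqz)).smul hg) hfac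
  exact ⟨_, w, hc, hw, hvw, by simp [hwz, hqz, hgz]⟩

theorem AnalyticPeriodic.exists_eq_smul_forall_ne_zero {v : ℝ → F} (hv : AnalyticPeriodic v)
    (h0 : v ≠ 0) :
    ∃ (c : ℝ → ℂ) (w : ℝ → F),
      AnalyticPeriodic c ∧ AnalyticPeriodic w ∧ v = c • w ∧ ∀ x, w x ≠ 0 := by
  have hfin (s : Finset ℝ) : ∃ (c : ℝ → ℂ) (w : ℝ → F),
      AnalyticPeriodic c ∧ AnalyticPeriodic w ∧ v = c • w ∧ ∀ z ∈ s, w z ≠ 0 := by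
    induction s using Finset.induction_on with
    | empty => exact ⟨1, v, .const 1, hv, (one_smul _ v).symm, by simp⟩
    | insert z s _ ih =>
      obtain ⟨c, w, hc, hw, rfl, hws⟩ := ih
      have hw0 : w ≠ 0 := by
        rintro rfl
        exact h0 (smul_zero c)
      obtain ⟨c', w', hc', hw', rfl, hwz⟩ := hw.exists_eq_smul_apply_ne_zero hw0 z
      refine ⟨c • c', w', hc.smul hc', hw', (smul_assoc c c' w').symm, ?_⟩
      refine Finset.forall_mem_insert .. |>.2 ⟨hwz, fun y hy hwy => hws y hy ?_⟩
      simp [hwy]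
  obtain ⟨c, w, hc, hw, rfl, hws⟩ := hfin (hv.finite_zeros h0).toFinset
  refine ⟨c, w, hc, hw, rfl, fun x hx => ?_⟩
  obtain ⟨y, hy, hxy⟩ := hw.periodic.exists_mem_Ico₀ one_pos x
  refine hws y ?_ (hxy ▸ hx)
  simp [hxy ▸ hx, hy.1, hy.2.le]

end AnalyticFunctions

section AnalyticPeriodicAlgebra

theorem AnalyticPeriodic.eq_zero_or_eq_zero_of_mul_eq_zero {f g : ℝ → ℂ}
    (hf : AnalyticPeriodic f) (hg : AnalyticPeriodic g) (hfg : f * g = 0) : f = 0 ∨ g = 0 := by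
  refine (AnalyticOnNhd.eq_zero_or_eq_zero_of_smul_eq_zero (fun x _ => hf.analyticAt x)
    (fun x _ => hg.analyticAt x) (fun x _ => congrFun hfg x) isPreconnected_univ).imp ?_ ?_ <;>
  exact fun h => funext fun x => h x (Set.mem_univ x)

/-- The star algebra of complex valued real analytic, 1-periodic functions on the line. -/
def analyticPeriodicAlgebra : StarSubalgebra ℂ (ℝ → ℂ) where
  carrier := {f | AnalyticPeriodic f}
  mul_mem' hf hg := hf.smul hg
  add_mem' hf hg :=
    ⟨fun x => (hf.analyticAt x).add (hg.analyticAt x), hf.periodic.add hg.periodic⟩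
  algebraMap_mem' c := .const c
  star_mem' hf := hf.comp (g := star) fun _ =>
    (Complex.conjCLE : ℂ →L[ℝ] ℂ).analyticAt _

instance : IsDomain analyticPeriodicAlgebra :=
  have : NoZeroDivisors analyticPeriodicAlgebra := ⟨fun {f g} hfg =>
    (f.2.eq_zero_or_eq_zero_of_mul_eq_zero g.2 (congrArg Subtype.val hfg)).imp
      Subtype.ext Subtype.ext⟩
  NoZeroDivisors.to_isDomain _

/-- Translation by `α` on the algebra of analytic periodic functions. -/
def shiftHom (α : ℝ) : analyticPeriodicAlgebra →+* analyticPeriodicAlgebra where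
  toFun f := ⟨fun x => f.1 (x + α), f.2.comp_add_right α⟩
  map_one' := rfl
  map_mul' _ _ := rfl
  map_zero' := rfl
  map_add' _ _ := rfl

/-- Evaluation at `x` on the algebra of analytic periodic functions. -/
noncomputable def evalAt (x : ℝ) : analyticPeriodicAlgebra →⋆ₐ[ℂ] ℂ :=
  (Pi.evalStarAlgHom ℂ (fun _ : ℝ => ℂ) x).comp analyticPeriodicAlgebra.subtype

theorem AnalyticPeriodic.norm {E : Type*} [NormedAddCommGroup E] [InnerProductSpace ℂ E]
    {v : ℝ → E} (hv : AnalyticPeriodic v) (hv0 : ∀ x, v x ≠ 0) : AnalyticPeriodic fun x => ‖v x‖ :=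
  hv.comp fun x => (contDiffAt_norm ℂ (hv0 x)).analyticAt

theorem AnalyticPeriodic.exists_eq_smul_norm_eq_one {E : Type*} [NormedAddCommGroup E]
    [InnerProductSpace ℂ E] {v : ℝ → E} (hv : AnalyticPeriodic v) (h0 : v ≠ 0) :
    ∃ (c : ℝ → ℂ) (u : ℝ → E),
      AnalyticPeriodic c ∧ AnalyticPeriodic u ∧ v = c • u ∧ ∀ x, ‖u x‖ = 1 := by
  obtain ⟨c, w, hc, hw, rfl, hw0⟩ := hv.exists_eq_smul_forall_ne_zero h0
  have hr : AnalyticPeriodic fun x => (‖w x‖ : ℂ) :=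
    (hw.norm hw0).comp fun _ => Complex.ofRealCLM.analyticAt _
  have hr0 (x : ℝ) : (‖w x‖ : ℂ) ≠ 0 := by simpa using hw0 x
  have hr_inv : AnalyticPeriodic fun x => (‖w x‖ : ℂ)⁻¹ :=
    hr.comp fun x => analyticAt_inv (hr0 x)
  refine ⟨_, _, hc.smul hr, hr_inv.smul hw, funext fun x => ?_, fun x => ?_⟩
  · simp only [Pi.smul_apply', smul_assoc, smul_inv_smul₀ (hr0 x)]
  · simp [norm_smul, hw0 x]

theorem analyticPeriodic_euclideanSpace {ι : Type*} [Fintype ι] {v : ℝ → EuclideanSpace ℂ ι} :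
    AnalyticPeriodic v ↔ ∀ i, AnalyticPeriodic fun x => v x i := by
  refine ⟨fun hv i => ⟨fun x => ?_, fun x => by rw [hv.periodic]⟩,
    fun hv => ⟨fun x => ?_, fun x => ?_⟩⟩
  · exact ((contDiffAt_piLp 2).1 (hv.analyticAt x).contDiffAt i).analyticAt
  · exact ((contDiffAt_piLp 2).2 fun i => ((hv i).analyticAt x).contDiffAt).analyticAt
  · ext i
    exact (hv i).periodic x

theorem hasUnitDirections_analyticPeriodicAlgebra : HasUnitDirections analyticPeriodicAlgebra := by
  intro n v hv
  have hv_an : AnalyticPeriodic fun x => WithLp.toLp 2 fun i => (v i).1 x :=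
    analyticPeriodic_euclideanSpace.2 fun i => (v i).2
  have hv0 : (fun x => WithLp.toLp 2 fun i => (v i).1 x) ≠ 0 := fun h =>
    hv (funext fun i => Subtype.ext (funext fun x => congrArg (fun u => u.ofLp i) (congrFun h x)))
  obtain ⟨c, u, hc, hu, hvu, hu1⟩ := hv_an.exists_eq_smul_norm_eq_one hv0
  set w : Fin n → analyticPeriodicAlgebra := fun i => ⟨_, analyticPeriodic_euclideanSpace.1 hu i⟩
  have hw (x : ℝ) : evalAt x (star w ⬝ᵥ w) = inner ℂ (u x) (u x) := by
    rw [dotProduct, map_sum, PiLp.inner_apply]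
    exact Finset.sum_congr rfl fun i _ => mul_comm _ _
  refine ⟨⟨c, hc⟩, w, Subtype.ext (funext fun x => (hw x).trans ?_), ?_⟩
  · simp [inner_self_eq_norm_sq_to_K, hu1]
  · ext i x
    exact congrArg (fun u => u.ofLp i) (congrFun hvu x)

end AnalyticPeriodicAlgebra

section AnalyticMatrices

open Matrix

variable {d e : ℕ}

theorem analyticPeriodicMat_iff {A : ℝ → Matrix (Fin d) (Fin e) ℂ} :
    AnalyticPeriodicMat A ↔ ∀ i j, AnalyticPeriodic fun x => A x i j :=
  ⟨fun hA i j => ⟨fun x => hA.2 x i j, fun x => congrFun₂ (hA.1 x) i j⟩,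
    fun hA => ⟨fun x => Matrix.ext fun i j => (hA i j).periodic x,
      fun x i j => (hA i j).analyticAt x⟩⟩

theorem analyticPeriodicMat_iff_exists_map_evalAt {A : ℝ → Matrix (Fin d) (Fin e) ℂ} :
    AnalyticPeriodicMat A ↔
      ∃ M : Matrix (Fin d) (Fin e) analyticPeriodicAlgebra, A = fun x => M.map (evalAt x) := by
  refine ⟨fun hA => ?_, ?_⟩
  · exact ⟨of fun i j => ⟨_, analyticPeriodicMat_iff.1 hA i j⟩, rfl⟩
  · rintro ⟨M, rfl⟩
    exact analyticPeriodicMat_iff.2 fun i j => (M i j).2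

theorem AnalyticPeriodicMat.continuous {A : ℝ → Matrix (Fin d) (Fin e) ℂ}
    (hA : AnalyticPeriodicMat A) : Continuous A :=
  continuous_matrix fun i j => (analyticPeriodicMat_iff.1 hA i j).continuous

theorem AnalyticPeriodicMat.det {A : ℝ → Matrix (Fin d) (Fin d) ℂ} (hA : AnalyticPeriodicMat A) :
    AnalyticPeriodic fun x => (A x).det := by
  obtain ⟨M, rfl⟩ := analyticPeriodicMat_iff_exists_map_evalAt.1 hA
  have hdet : (fun x => (M.map (evalAt x)).det) = M.det.1 :=
    funext fun x => ((evalAt x).toRingHom.map_det M).symm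
  exact hdet ▸ M.det.2

end AnalyticMatrices

section Cocycles

open Matrix

variable {d : ℕ} {α : ℝ}

/-- The cocycle `U(x + α)* A(x) U(x)` obtained from `A` by the unitary change of frame `U`. -/
def cocycleConj (α : ℝ) (U A : ℝ → Matrix (Fin d) (Fin d) ℂ) (x : ℝ) :
    Matrix (Fin d) (Fin d) ℂ :=
  star (U (x + α)) * A x * U x

theorem matIter_cocycleConj {U : ℝ → Matrix (Fin d) (Fin d) ℂ}
    (hU : ∀ x, U x ∈ unitaryGroup (Fin d) ℂ) (A : ℝ → Matrix (Fin d) (Fin d) ℂ) (n : ℕ) (x : ℝ) :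
    matIter α (cocycleConj α U A) n x = star (U (x + n * α)) * matIter α A n x * U x := by
  induction n generalizing x with
  | zero => simp [matIter, mem_unitaryGroup_iff'.1 (hU x)]
  | succ n ih =>
    have hUU : U (x + α) * star (U (x + α)) = 1 := mem_unitaryGroup_iff.1 (hU _)
    have hshift : x + α + n * α = x + (n + 1 : ℕ) * α := by push_cast; ring
    calc matIter α (cocycleConj α U A) n (x + α) * cocycleConj α U A x
        = star (U (x + α + n * α)) * matIter α A n (x + α) * (U (x + α) * star (U (x + α))) *
            A x * U x := by simp only [ih, cocycleConj, Matrix.mul_assoc]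
      _ = star (U (x + (n + 1 : ℕ) * α)) * (matIter α A n (x + α) * A x) * U x := by
        simp only [hUU, hshift, Matrix.mul_one, Matrix.mul_assoc]

theorem matIter_apply_eq_zero {B : ℝ → Matrix (Fin d) (Fin d) ℂ} {m : ℕ}
    (hB : ∀ x, HasNilpotentCorner m (B x)) (n : ℕ) (x : ℝ) {i j : Fin d} (hj : (j : ℕ) < m)
    (hji : (j : ℕ) < i + n) : matIter α B n x i j = 0 := by
  induction n generalizing x i j with
  | zero => exact one_apply_ne' (Fin.ne_of_lt hji)
  | succ n ih =>
    refine (mul_apply ..).trans (Finset.sum_eq_zero fun l _ => ?_)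
    rcases lt_or_ge (l : ℕ) j with hl | hl
    · rw [ih (x + α) (hl.trans hj) (by omega), zero_mul]
    · rw [hB x l j hj hl, mul_zero]

theorem bottomRight_matIter {k : ℕ} (hk : k ≤ d) {B : ℝ → Matrix (Fin d) (Fin d) ℂ}
    (hB : ∀ x, HasNilpotentCorner (d - k) (B x)) (n : ℕ) (x : ℝ) :
    bottomRight hk (matIter α B n x) = matIter α (fun t => bottomRight hk (B t)) n x := by
  induction n generalizing x with
  | zero =>
    ext i j
    simp [matIter, bottomRight, one_apply, (lastFin_injective hk).eq_iff]
  | succ n ih =>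
    rw [matIter, bottomRight_mul, ih, matIter]
    exact fun i j hi hj => matIter_apply_eq_zero hB n (x + α) hj (by omega)

theorem matIter_eq_zero_of_hasNilpotentCorner {B : ℝ → Matrix (Fin d) (Fin d) ℂ}
    (hB : ∀ x, HasNilpotentCorner d (B x)) (x : ℝ) : matIter α B d x = 0 :=
  Matrix.ext fun _ j => matIter_apply_eq_zero hB d x j.isLt (by omega)

end Cocycles

section SingularValues

open Matrix
open scoped Matrix.Norms.L2Operator

variable {d k κ : ℕ}

/-- `‖M v‖ ≥ t ‖v‖` on some `κ`-dimensional subspace. By the max-min principle, the supremum of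
such `t` is the `κ`-th singular value of `M`. -/
def HasExpandingSubspace (κ : ℕ) (M : Matrix (Fin d) (Fin d) ℂ) (t : ℝ) : Prop :=
  ∃ V : Submodule ℂ (EuclideanSpace ℂ (Fin d)),
    Module.finrank ℂ V = κ ∧ ∀ v ∈ V, t * ‖v‖ ≤ ‖toEuclideanLin M v‖

theorem norm_toEuclideanLin_le {m n : ℕ} (M : Matrix (Fin m) (Fin n) ℂ)
    (v : EuclideanSpace ℂ (Fin n)) : ‖toEuclideanLin M v‖ ≤ ‖M‖ * ‖v‖ :=
  M.l2_opNorm_mulVec v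

theorem l2_opNorm_le_one_of_conjTranspose_mul_self_eq_one {P : Matrix (Fin d) (Fin k) ℂ}
    (hP : Pᴴ * P = 1) : ‖P‖ ≤ 1 := by
  have hone : ‖(1 : Matrix (Fin k) (Fin k) ℂ)‖ ≤ 1 := by
    rw [← diagonal_one, l2_opNorm_diagonal]
    exact (pi_norm_le_iff_of_nonneg zero_le_one).2 fun _ => by simp
  rw [← hP, l2_opNorm_conjTranspose_mul_self, ← sq] at hone
  exact (sq_le_one_iff₀ (norm_nonneg P)).1 hone

theorem norm_toEuclideanLin_conjTranspose_le {P : Matrix (Fin d) (Fin k) ℂ} (hP : Pᴴ * P = 1)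
    (v : EuclideanSpace ℂ (Fin d)) : ‖toEuclideanLin Pᴴ v‖ ≤ ‖v‖ := by
  refine (norm_toEuclideanLin_le _ _).trans (mul_le_of_le_one_left (norm_nonneg v) ?_)
  exact (l2_opNorm_conjTranspose P).trans_le
    (l2_opNorm_le_one_of_conjTranspose_mul_self_eq_one hP)

theorem norm_toEuclideanLin_of_conjTranspose_mul_self_eq_one {P : Matrix (Fin d) (Fin k) ℂ}
    (hP : Pᴴ * P = 1) (v : EuclideanSpace ℂ (Fin k)) : ‖toEuclideanLin P v‖ = ‖v‖ := by
  refine le_antisymm ((norm_toEuclideanLin_le P v).trans (mul_le_of_le_one_left (norm_nonneg v)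
    (l2_opNorm_le_one_of_conjTranspose_mul_self_eq_one hP))) ?_
  calc ‖v‖ = ‖toEuclideanLin Pᴴ (toEuclideanLin P v)‖ := by
        rw [← LinearMap.comp_apply, ← toLpLin_mul_same, hP, toLpLin_one, LinearMap.id_apply]
    _ ≤ ‖toEuclideanLin P v‖ := norm_toEuclideanLin_conjTranspose_le hP _

theorem HasExpandingSubspace.of_conjTranspose_mul_mul {M : Matrix (Fin d) (Fin d) ℂ}
    {P Q : Matrix (Fin d) (Fin k) ℂ} {t : ℝ} (hP : Pᴴ * P = 1) (hQ : Qᴴ * Q = 1)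
    (h : HasExpandingSubspace κ (Pᴴ * M * Q) t) : HasExpandingSubspace κ M t := by
  obtain ⟨V, hV, ht⟩ := h
  have hinj : Function.Injective (toEuclideanLin Q) :=
    (AddMonoidHomClass.isometry_of_norm _
      (norm_toEuclideanLin_of_conjTranspose_mul_self_eq_one hQ)).injective
  refine ⟨V.map (toEuclideanLin Q), ?_, ?_⟩
  · exact (V.equivMapOfInjective _ hinj).finrank_eq.symm.trans hV
  · rintro _ ⟨v, hv, rfl⟩
    rw [norm_toEuclideanLin_of_conjTranspose_mul_self_eq_one hQ]
    calc t * ‖v‖ ≤ ‖toEuclideanLin (Pᴴ * M * Q) v‖ := ht v hv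
      _ = ‖toEuclideanLin Pᴴ (toEuclideanLin M (toEuclideanLin Q v))‖ := by
        simp only [toLpLin_mul_same, LinearMap.comp_apply]
      _ ≤ _ := norm_toEuclideanLin_conjTranspose_le hP _

theorem singVal_star_mul_mul {U V : Matrix (Fin d) (Fin d) ℂ} (hU : U ∈ unitaryGroup (Fin d) ℂ)
    (hV : V ∈ unitaryGroup (Fin d) ℂ) (κ : ℕ) (M : Matrix (Fin d) (Fin d) ℂ) :
    singVal κ (star U * M * V) = singVal κ M := by
  refine congrArg sSup (Set.ext fun t => ⟨fun h => ?_, fun h => ?_⟩)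
  · exact HasExpandingSubspace.of_conjTranspose_mul_mul (mem_unitaryGroup_iff'.1 hU)
      (mem_unitaryGroup_iff'.1 hV) h
  · have hM : Uᴴᴴ * (star U * M * V) * star V = M := by
      simp only [conjTranspose_conjTranspose, Matrix.mul_assoc, mem_unitaryGroup_iff.1 hV,
        Matrix.mul_one]
      rw [← Matrix.mul_assoc, mem_unitaryGroup_iff.1 hU, Matrix.one_mul]
    refine HasExpandingSubspace.of_conjTranspose_mul_mul (P := Uᴴ) (Q := star V)
      (mem_unitaryGroup_iff'.1 (Unitary.star_mem hU))
      (mem_unitaryGroup_iff'.1 (Unitary.star_mem hV)) ?_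
    rwa [hM]

theorem HasExpandingSubspace.of_bottomRight {hk : k ≤ d} {M : Matrix (Fin d) (Fin d) ℂ} {t : ℝ}
    (h : HasExpandingSubspace κ (bottomRight hk M) t) : HasExpandingSubspace κ M t := by
  set P : Matrix (Fin d) (Fin k) ℂ := (1 : Matrix (Fin d) (Fin d) ℂ).submatrix id (lastFin hk)
  have hP : Pᴴ * P = 1 := by
    ext i j
    simp [P, mul_apply, one_apply, (lastFin_injective hk).eq_iff]
  have hM : bottomRight hk M = Pᴴ * M * P := by
    ext i j
    simp [P, mul_apply, one_apply, bottomRight]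
  exact (hM ▸ h).of_conjTranspose_mul_mul hP hP

theorem hasExpandingSubspace_of_forall (hκ : κ ≤ d) {M : Matrix (Fin d) (Fin d) ℂ} {t : ℝ}
    (h : ∀ v, t * ‖v‖ ≤ ‖toEuclideanLin M v‖) : HasExpandingSubspace κ M t := by
  obtain ⟨f, hf⟩ := exists_linearIndependent_of_le_finrank
    (hκ.trans_eq (finrank_euclideanSpace_fin (𝕜 := ℂ)).symm)
  exact ⟨Submodule.span ℂ (Set.range f), by simp [finrank_span_eq_card hf], fun v _ => h v⟩

theorem HasExpandingSubspace.le_singVal (hκ : κ ≠ 0) {M : Matrix (Fin d) (Fin d) ℂ} {t : ℝ}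
    (h : HasExpandingSubspace κ M t) : t ≤ singVal κ M := by
  refine le_csSup ⟨‖M‖, ?_⟩ h
  rintro s ⟨V, hV, hs⟩
  have hVbot : V ≠ ⊥ := Submodule.one_le_finrank_iff.1 (by omega)
  obtain ⟨v, hv, hv0⟩ := V.exists_mem_ne_zero_of_ne_bot hVbot
  exact le_of_mul_le_mul_right ((hs v hv).trans (norm_toEuclideanLin_le M v)) (norm_pos_iff.2 hv0)

theorem rank_eq_finrank_range_toEuclideanLin (M : Matrix (Fin d) (Fin d) ℂ) :
    M.rank = Module.finrank ℂ (LinearMap.range (toEuclideanLin M)) := by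
  rw [M.rank_eq_finrank_range_toLin (PiLp.basisFun 2 ℂ (Fin d)) (PiLp.basisFun 2 ℂ (Fin d)),
    ← toLpLin_eq_toLin]

theorem HasExpandingSubspace.le_rank {M : Matrix (Fin d) (Fin d) ℂ} {t : ℝ} (ht : 0 < t)
    (h : HasExpandingSubspace κ M t) : κ ≤ M.rank := by
  obtain ⟨V, rfl, hV⟩ := h
  have hinj : Function.Injective ((toEuclideanLin M).domRestrict V) := by
    refine (injective_iff_map_eq_zero _).2 fun v hv => norm_le_zero_iff.1 ?_
    have hv' := hV v v.2
    rw [← LinearMap.domRestrict_apply, hv, norm_zero] at hv'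
    exact nonpos_of_mul_nonpos_right hv' ht
  calc Module.finrank ℂ V = Module.finrank ℂ (LinearMap.range ((toEuclideanLin M).domRestrict V)) :=
        (LinearMap.finrank_range_of_inj hinj).symm
    _ ≤ Module.finrank ℂ (LinearMap.range (toEuclideanLin M)) :=
        Submodule.finrank_mono (LinearMap.range_domRestrict_le_range _ _)
    _ = M.rank := (rank_eq_finrank_range_toEuclideanLin M).symm

theorem singVal_eq_zero_of_rank_lt (hκ : κ ≤ d) {M : Matrix (Fin d) (Fin d) ℂ}
    (hM : M.rank < κ) : singVal κ M = 0 := by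
  refine IsGreatest.csSup_eq ⟨hasExpandingSubspace_of_forall hκ (by simp), fun t ht => ?_⟩
  by_contra! hpos
  exact hM.not_ge (HasExpandingSubspace.le_rank hpos ht)

theorem exists_mul_norm_det_mul_norm_le {D : ℝ → Matrix (Fin k) (Fin k) ℂ} (hD : Continuous D)
    (hper : Function.Periodic D 1) :
    ∃ c > 0, ∀ x v, c * ‖(D x).det‖ * ‖v‖ ≤ ‖toEuclideanLin (D x) v‖ := by
  obtain ⟨C, hC0, hC⟩ := ((hper.comp adjugate).isBounded_of_continuous one_ne_zero
    hD.matrix_adjugate).exists_pos_norm_le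
  refine ⟨C⁻¹, inv_pos.2 hC0, fun x v => ?_⟩
  rw [mul_assoc, inv_mul_le_iff₀ hC0]
  calc ‖(D x).det‖ * ‖v‖ = ‖toEuclideanLin (D x).adjugate (toEuclideanLin (D x) v)‖ := by
        rw [← LinearMap.comp_apply, ← toLpLin_mul_same, adjugate_mul, map_smul, toLpLin_one,
          LinearMap.smul_apply, LinearMap.id_apply, norm_smul]
    _ ≤ ‖(D x).adjugate‖ * ‖toEuclideanLin (D x) v‖ := norm_toEuclideanLin_le _ _
    _ ≤ C * ‖toEuclideanLin (D x) v‖ := by gcongr; exact hC _ ⟨x, rfl⟩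

theorem prod_mul_norm_le_norm_matIter {α : ℝ} {D : ℝ → Matrix (Fin k) (Fin k) ℂ} {δ : ℝ → ℝ}
    (hδ0 : ∀ x, 0 ≤ δ x) (hδ : ∀ x v, δ x * ‖v‖ ≤ ‖toEuclideanLin (D x) v‖) (n : ℕ) (x : ℝ)
    (v : EuclideanSpace ℂ (Fin k)) :
    (∏ j ∈ Finset.range n, δ (x + j * α)) * ‖v‖ ≤ ‖toEuclideanLin (matIter α D n x) v‖ := by
  induction n generalizing x v with
  | zero => simp [matIter]
  | succ n ih =>
    have hshift (j : ℕ) : x + (j + 1 : ℕ) * α = x + α + j * α := by push_cast; ring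
    calc (∏ j ∈ Finset.range (n + 1), δ (x + j * α)) * ‖v‖
        = (∏ j ∈ Finset.range n, δ (x + α + j * α)) * (δ x * ‖v‖) := by
          simp only [Finset.prod_range_succ', hshift, Nat.cast_zero, zero_mul, add_zero, mul_assoc]
      _ ≤ (∏ j ∈ Finset.range n, δ (x + α + j * α)) * ‖toEuclideanLin (D x) v‖ :=
          mul_le_mul_of_nonneg_left (hδ x v) (Finset.prod_nonneg fun j _ => hδ0 _)
      _ ≤ ‖toEuclideanLin (matIter α D n (x + α)) (toEuclideanLin (D x) v)‖ := ih _ _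
      _ = ‖toEuclideanLin (matIter α D (n + 1) x) v‖ := by
          rw [matIter, toLpLin_mul_same, LinearMap.comp_apply]

end SingularValues

section Lyapunov

theorem integral_le_elogIntegral {X : Type*} [MeasurableSpace X] {μ : Measure X} {g h : X → ℝ}
    (hh : Integrable h μ) (hg : ∀ᵐ x ∂μ, g x ≠ 0) (hle : ∀ᵐ x ∂μ, h x ≤ Real.log (g x)) :
    ((∫ x, h x ∂μ : ℝ) : EReal) ≤ elogIntegral μ g := by
  have hneg : ∫⁻ x, ENNReal.ofReal (-Real.log (g x)) ∂μ ≤ ∫⁻ x, ENNReal.ofReal (-h x) ∂μ :=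
    lintegral_mono_ae (hle.mono fun x hx => ENNReal.ofReal_le_ofReal (neg_le_neg hx))
  have hpos : ∫⁻ x, ENNReal.ofReal (h x) ∂μ ≤ ∫⁻ x, ENNReal.ofReal (Real.log (g x)) ∂μ :=
    lintegral_mono_ae (hle.mono fun x hx => ENNReal.ofReal_le_ofReal hx)
  have hneg_lt : ∫⁻ x, ENNReal.ofReal (-h x) ∂μ < ⊤ := hh.neg.lintegral_lt_top
  have hg0 : μ {x | g x = 0} = 0 := by simpa [ae_iff] using hg
  rw [elogIntegral, if_pos ⟨hg0, (hneg.trans_lt hneg_lt).ne⟩,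
    integral_eq_lintegral_pos_part_sub_lintegral_neg_part hh, EReal.coe_sub,
    EReal.coe_ennreal_toReal hh.lintegral_lt_top.ne,
    EReal.coe_ennreal_toReal hneg_lt.ne]
  exact EReal.sub_le_sub (EReal.coe_ennreal_le_coe_ennreal_iff.2 hpos)
    (EReal.coe_ennreal_le_coe_ennreal_iff.2 hneg)

theorem AnalyticPeriodic.ae_ne_zero {E : Type*} [NormedAddCommGroup E] [NormedSpace ℝ E]
    {F : ℝ → E} (hF : AnalyticPeriodic F) (h0 : F ≠ 0) :
    ∀ᵐ x ∂volume.restrict (Set.Ioc (0 : ℝ) 1), F x ≠ 0 := by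
  rw [ae_restrict_iff' measurableSet_Ioc]
  filter_upwards [(hF.finite_zeros h0).countable.ae_notMem volume] with x hx hx01 hFx
  exact hx ⟨Set.Ioc_subset_Icc_self hx01, hFx⟩

theorem AnalyticPeriodic.integrable_log_norm {E : Type*} [NormedAddCommGroup E] [NormedSpace ℝ E]
    {F : ℝ → E} (hF : AnalyticPeriodic F) :
    Integrable (fun x => Real.log ‖F x‖) (volume.restrict (Set.Ioc 0 1)) :=
  (MeromorphicOn.intervalIntegrable_log_norm fun x _ => (hF.analyticAt x).meromorphicAt).1

theorem setIntegral_Ioc_comp_add_of_periodic {f : ℝ → ℝ} (hf : Function.Periodic f 1)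
    (a : ℝ) : ∫ x in Set.Ioc 0 1, f (x + a) = ∫ x in Set.Ioc 0 1, f x := by
  simp only [← intervalIntegral.integral_of_le zero_le_one]
  rw [intervalIntegral.integral_comp_add_right, zero_add, add_comm 1 a,
    hf.intervalIntegral_add_eq a 0, zero_add]

theorem AnalyticPeriodic.integral_log_norm_le_elogIntegral {E : Type*} [NormedAddCommGroup E]
    [NormedSpace ℝ E] {F : ℝ → E} (hF : AnalyticPeriodic F) (h0 : F ≠ 0) {α : ℝ} {n : ℕ}
    {g : ℝ → ℝ} (hg : ∀ x, ∏ j ∈ Finset.range n, ‖F (x + j * α)‖ ≤ g x) :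
    ((n * ∫ x in Set.Ioc 0 1, Real.log ‖F x‖ : ℝ) : EReal) ≤
      elogIntegral (volume.restrict (Set.Ioc (0 : ℝ) 1)) g := by
  have hshift (j : ℕ) : AnalyticPeriodic fun x => F (x + j * α) := hF.comp_add_right _
  have hne : ∀ᵐ x ∂volume.restrict (Set.Ioc (0 : ℝ) 1),
      ∀ j ∈ Finset.range n, ‖F (x + j * α)‖ ≠ 0 := by
    refine (ae_ball_iff (Finset.range n).countable_toSet).2 fun j _ => ?_
    simp only [norm_ne_zero_iff]
    refine (hshift j).ae_ne_zero fun h => h0 (funext fun x => ?_)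
    simpa using congrFun h (x - j * α)
  have hpos {x : ℝ} (hx : ∀ j ∈ Finset.range n, ‖F (x + j * α)‖ ≠ 0) :
      0 < ∏ j ∈ Finset.range n, ‖F (x + j * α)‖ :=
    Finset.prod_pos fun j hj => (norm_nonneg _).lt_of_ne' (hx j hj)
  have hper : Function.Periodic (fun x => Real.log ‖F x‖) 1 := fun x => by
    simp only [hF.periodic x]
  have hint (j : ℕ) := (hshift j).integrable_log_norm
  calc ((n * ∫ x in Set.Ioc 0 1, Real.log ‖F x‖ : ℝ) : EReal)
      = ((∫ x in Set.Ioc 0 1, ∑ j ∈ Finset.range n, Real.log ‖F (x + j * α)‖ : ℝ) : EReal) := by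
        rw [integral_finsetSum _ fun j _ => hint j]
        simp only [setIntegral_Ioc_comp_add_of_periodic hper, Finset.sum_const,
          Finset.card_range, nsmul_eq_mul]
    _ ≤ _ := by
        refine integral_le_elogIntegral (integrable_finsetSum _ fun j _ => hint j) ?_ ?_
        · filter_upwards [hne] with x hx
          exact ((hpos hx).trans_le (hg x)).ne'
        · filter_upwards [hne] with x hx
          rw [← Real.log_prod hx]
          exact Real.log_le_log (hpos hx) (hg x)

variable {d κ : ℕ} {α : ℝ} {A : ℝ → Matrix (Fin d) (Fin d) ℂ} {L : EReal}

theorem HasLyapunovExp.integral_log_norm_le {E : Type*} [NormedAddCommGroup E] [NormedSpace ℝ E]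
    (hL : HasLyapunovExp α A κ L) {F : ℝ → E} (hF : AnalyticPeriodic F) (h0 : F ≠ 0)
    (hFA : ∀ n x, ∏ j ∈ Finset.range n, ‖F (x + j * α)‖ ≤ singVal κ (matIter α A n x)) :
    ((∫ x in Set.Ioc 0 1, Real.log ‖F x‖ : ℝ) : EReal) ≤ L := by
  refine ge_of_tendsto hL ((eventually_ne_atTop 0).mono fun n hn => ?_)
  have hn0 : (n : ℝ) ≠ 0 := Nat.cast_ne_zero.2 hn
  rw [← inv_mul_cancel_left₀ hn0 (∫ x in Set.Ioc 0 1, Real.log ‖F x‖), EReal.coe_mul]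
  refine mul_le_mul_of_nonneg_left (hF.integral_log_norm_le_elogIntegral h0 (hFA n)) ?_
  exact EReal.coe_nonneg.2 (by positivity)

theorem elogIntegral_zero {X : Type*} [MeasurableSpace X] {μ : Measure X} (hμ : μ ≠ 0) :
    elogIntegral μ (fun _ => 0) = ⊥ := by
  simp [elogIntegral, hμ]

theorem HasLyapunovExp.eq_bot_of_singVal_eq_zero (hL : HasLyapunovExp α A κ L)
    (h0 : ∀ᶠ n in atTop, ∀ x, singVal κ (matIter α A n x) = 0) : L = ⊥ := by
  refine tendsto_nhds_unique hL (tendsto_const_nhds.congr' ?_)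
  filter_upwards [h0, eventually_gt_atTop 0] with n hn hn0
  simp only [hn]
  rw [elogIntegral_zero (by simp), EReal.coe_mul_bot_of_pos (by positivity)]

end Lyapunov

section BlockFrame

open Matrix

variable {d k κ : ℕ} {α : ℝ} {A U : ℝ → Matrix (Fin d) (Fin d) ℂ} {hk : k ≤ d}

/-- The analytic unitary frame `U` brings the cocycle `(α, A)` to the form `[[a, b], [0, D]]`,
where `a` is strictly upper triangular and `D` is an analytic `k × k` block whose determinant
does not vanish identically. -/
structure IsBlockFrame (α : ℝ) (A U : ℝ → Matrix (Fin d) (Fin d) ℂ) {k : ℕ} (hk : k ≤ d) :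
    Prop where
  analyticPeriodicMat : AnalyticPeriodicMat U
  mem_unitaryGroup (x : ℝ) : U x ∈ unitaryGroup (Fin d) ℂ
  hasNilpotentCorner (x : ℝ) : HasNilpotentCorner (d - k) (cocycleConj α U A x)
  analyticPeriodicMat_bottomRight :
    AnalyticPeriodicMat fun x => bottomRight hk (cocycleConj α U A x)
  det_bottomRight_ne_zero : (fun x => (bottomRight hk (cocycleConj α U A x)).det) ≠ 0

theorem AnalyticPeriodicMat.exists_isBlockFrame (hA : AnalyticPeriodicMat A) (α : ℝ) :
    ∃ (U : ℝ → Matrix (Fin d) (Fin d) ℂ) (k : ℕ) (hk : k ≤ d), IsBlockFrame α A U hk := by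
  obtain ⟨M, rfl⟩ := analyticPeriodicMat_iff_exists_map_evalAt.1 hA
  obtain ⟨V, hV, k, hk, hcorner, hdet⟩ :=
    hasUnitDirections_analyticPeriodicAlgebra.exists_unitary_blockForm (shiftHom α) M
  set N := (V.map (shiftHom α))ᴴ * M * V
  have hN (x : ℝ) : cocycleConj α (fun x => V.map (evalAt x)) (fun x => M.map (evalAt x)) x =
      N.map (evalAt x) := by
    rw [cocycleConj, star_eq_conjTranspose, Matrix.map_mul, Matrix.map_mul,
      conjTranspose_map _ (map_star (evalAt x))]
    rfl
  have hVx (x : ℝ) : V.map (evalAt x) ∈ unitaryGroup (Fin d) ℂ := by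
    rw [mem_unitaryGroup_iff', star_eq_conjTranspose] at hV ⊢
    rw [← conjTranspose_map _ (map_star (evalAt x)), ← Matrix.map_mul, hV,
      Matrix.map_one _ (map_zero _) (map_one _)]
  refine ⟨fun x => V.map (evalAt x), k, hk,
    analyticPeriodicMat_iff_exists_map_evalAt.2 ⟨V, rfl⟩, hVx, fun x i j hj hij => ?_, ?_, ?_⟩
  · rw [hN, map_apply, hcorner i j hj hij, map_zero]
  · simp only [hN]
    exact analyticPeriodicMat_iff_exists_map_evalAt.2 ⟨bottomRight hk N, rfl⟩
  · simp only [hN]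
    intro hdet0
    refine hdet (Subtype.ext (funext fun x => ?_))
    exact ((evalAt x).toRingHom.map_det _).trans (congrFun hdet0 x)

theorem IsBlockFrame.rank_matIter_le (hU : IsBlockFrame α A U hk) {n : ℕ} (hn : d - k ≤ n)
    (x : ℝ) : (matIter α A n x).rank ≤ k := by
  have hdet (x : ℝ) : IsUnit (U x).det := UnitaryGroup.det_isUnit ⟨U x, hU.mem_unitaryGroup x⟩
  have hdet_star (x : ℝ) : IsUnit (star (U x)).det :=
    UnitaryGroup.det_isUnit (star ⟨U x, hU.mem_unitaryGroup x⟩)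
  rw [← rank_mul_eq_left_of_isUnit_det _ (matIter α A n x) (hdet x),
    ← rank_mul_eq_right_of_isUnit_det _ (matIter α A n x * U x) (hdet_star (x + n * α)),
    ← Matrix.mul_assoc, ← matIter_cocycleConj hU.mem_unitaryGroup]
  exact rank_le_of_cols_eq_zero hk fun i j hj =>
    matIter_apply_eq_zero hU.hasNilpotentCorner n x hj (by omega)

theorem IsBlockFrame.finite_not_isUnit_bottomRight (hU : IsBlockFrame α A U hk) :
    {x ∈ Set.Ico (0 : ℝ) 1 | ¬ IsUnit (bottomRight hk (cocycleConj α U A x))}.Finite := by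
  refine (hU.analyticPeriodicMat_bottomRight.det.finite_zeros hU.det_bottomRight_ne_zero).subset ?_
  rintro x ⟨hx, hunit⟩
  refine ⟨Set.Ico_subset_Icc_self hx, ?_⟩
  rwa [isUnit_iff_isUnit_det, isUnit_iff_ne_zero, not_not] at hunit

theorem IsBlockFrame.exists_prod_norm_le_singVal (hU : IsBlockFrame α A U hk) (hκ : κ ≠ 0)
    (hκk : κ ≤ k) : ∃ F : ℝ → ℂ, AnalyticPeriodic F ∧ F ≠ 0 ∧
      ∀ n x, ∏ j ∈ Finset.range n, ‖F (x + j * α)‖ ≤ singVal κ (matIter α A n x) := by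
  set D : ℝ → Matrix (Fin k) (Fin k) ℂ := fun x => bottomRight hk (cocycleConj α U A x)
  have hD_an : AnalyticPeriodicMat D := hU.analyticPeriodicMat_bottomRight
  obtain ⟨c, hc, hcD⟩ := exists_mul_norm_det_mul_norm_le hD_an.continuous hD_an.1
  refine ⟨fun x => (c : ℂ) * (D x).det, (AnalyticPeriodic.const (c : ℂ)).smul hD_an.det, ?_, ?_⟩
  · intro h
    refine hU.det_bottomRight_ne_zero (funext fun x => ?_)
    simpa [hc.ne'] using congrFun h x
  · intro n x
    have hiter : matIter α D n x = bottomRight hk (matIter α (cocycleConj α U A) n x) :=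
      (bottomRight_matIter hk hU.hasNilpotentCorner n x).symm
    have hconj := matIter_cocycleConj (α := α) hU.mem_unitaryGroup A n x
    rw [← singVal_star_mul_mul (hU.mem_unitaryGroup (x + n * α)) (hU.mem_unitaryGroup x), ← hconj]
    refine HasExpandingSubspace.le_singVal hκ (.of_bottomRight (hk := hk) ?_)
    rw [← hiter]
    refine hasExpandingSubspace_of_forall hκk fun v => ?_
    refine prod_mul_norm_le_norm_matIter (δ := fun x => ‖(c : ℂ) * (D x).det‖)
      (fun x => norm_nonneg _) (fun x v => ?_) n x v
    simpa [abs_of_pos hc] using hcD x v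

theorem IsBlockFrame.lyapunovExp_ne_bot_iff (hU : IsBlockFrame α A U hk) (hκ : κ ≠ 0)
    (hκd : κ ≤ d) {L : EReal} (hL : HasLyapunovExp α A κ L) : L ≠ ⊥ ↔ κ ≤ k := by
  refine ⟨fun hbot => ?_, fun hκk => ?_⟩
  · by_contra! hlt
    refine hbot (hL.eq_bot_of_singVal_eq_zero ?_)
    filter_upwards [eventually_ge_atTop (d - k)] with n hn x
    exact singVal_eq_zero_of_rank_lt hκd ((hU.rank_matIter_le hn x).trans_lt hlt)
  · obtain ⟨F, hF, hF0, hle⟩ := hU.exists_prod_norm_le_singVal hκ hκk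
    exact ne_bot_of_le_ne_bot (EReal.coe_ne_bot _) (hL.integral_log_norm_le hF hF0 hle)

end BlockFrame

/-- If `L_{k+1}(α,A) = -∞` and `L_k(α,A) > -∞` for some `1 ≤ k < d`, then
there is an analytic 1-periodic unitary `U` such that `B(x) = U(x+α)⁻¹ A(x) U(x)` has block
form `[[a, b], [0, d]]` where the `(d-k)×(d-k)` block `a` is strictly upper triangular
(hence the cocycle `(α,a)` is nilpotent: `a_{d-k} ≡ 0`) and the `k×k` block `d(x)` is
invertible for all but finitely many `x` of a period. In particular
`rank A_{d-k}(x) ≤ k` for all `x`. -/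
theorem stmt_4 {d k : ℕ} (hk1 : 1 ≤ k) (hkd : k < d) (α : ℝ)
    (A : ℝ → Matrix (Fin d) (Fin d) ℂ)
    (hA : AnalyticPeriodicMat A)
    (hLk1 : HasLyapunovExp α A (k + 1) ⊥)
    (hLk : ∃ L : EReal, L ≠ ⊥ ∧ HasLyapunovExp α A k L) :
    ∃ U : ℝ → Matrix (Fin d) (Fin d) ℂ,
      AnalyticPeriodicMat U ∧
      (∀ x : ℝ, U x ∈ Matrix.unitaryGroup (Fin d) ℂ) ∧
      -- strictly upper triangular top-left block and vanishing lower-left block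
      (∀ (x : ℝ) (i j : Fin d), (j : ℕ) < d - k → (j : ℕ) ≤ (i : ℕ) →
        (star (U (x + α)) * A x * U x) i j = 0) ∧
      -- the cocycle given by the top-left (d-k)×(d-k) block is nilpotent
      (∀ x : ℝ, matIter α
          (fun t => Matrix.of fun i j : Fin (d - k) =>
            (star (U (t + α)) * A t * U t)
              (Fin.castLE (by omega) i) (Fin.castLE (by omega) j))
          (d - k) x = 0) ∧
      -- the bottom-right k×k block is invertible off a finite subset of a period
      {x ∈ Set.Ico (0:ℝ) 1 | ¬ IsUnit (Matrix.of fun i j : Fin k =>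
          (star (U (x + α)) * A x * U x)
            (⟨d - k + (i : ℕ), by have := i.isLt; omega⟩ : Fin d)
            (⟨d - k + (j : ℕ), by have := j.isLt; omega⟩ : Fin d))}.Finite ∧
      (∀ x : ℝ, (matIter α A (d - k) x).rank ≤ k) := by
  obtain ⟨U, r, hr, hU⟩ := hA.exists_isBlockFrame α
  obtain ⟨L, hL, hLk⟩ := hLk
  have hkr : k ≤ r := (hU.lyapunovExp_ne_bot_iff (by omega) hkd.le hLk).1 hL
  have hrk : ¬ k + 1 ≤ r := fun h => (hU.lyapunovExp_ne_bot_iff (by omega) hkd hLk1).2 h rfl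
  obtain rfl : k = r := by omega
  refine ⟨U, hU.analyticPeriodicMat, hU.mem_unitaryGroup, hU.hasNilpotentCorner, fun x => ?_,
    hU.finite_not_isUnit_bottomRight, hU.rank_matIter_le le_rfl⟩
  exact matIter_eq_zero_of_hasNilpotentCorner
    (fun t i j _ hij => hU.hasNilpotentCorner t
      (Fin.castLE (Nat.sub_le d k) i) (Fin.castLE (Nat.sub_le d k) j) j.isLt hij) x
end

section
/- Let M : ℝ → ℂ^{d×k} be real analytic and 1-periodic with max_x rank M(x) = k. Then there exists a real analytic 1-periodic map 𝓜 : ℝ → ℂ^{d×k} such that 𝓜(x)*𝓜(x) = I_k for all x (i.e. the columns of 𝓜(x) are orthonormal), the column span of M(x) is contained in the column span of 𝓜(x) for all x, and the two spans coincide whenever rank M(x) = k (which holds for all but finitely many x in a period). -/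
open MeasureTheory Filter Topology Matrix

/-! A periodic real-analytic vector function `f ≢ 0` has finitely many zeros per period. Dividing it
by a product of chords `e^{2πix/T} - e^{2πiz/T}` of the unit circle, which vanish to first order
exactly at `z + Tℤ`, removes them without losing periodicity, so `f = c • e` with `e` periodic,
analytic and of norm one. Gram–Schmidt then survives the points where the rank drops: orthogonalize
each new column against the frame built so far, and take as next frame vector the factor `e` of the
result rather than its normalization. -/

open Set
open scoped ContDiff InnerProductSpace

section Quotients

variable {𝕜 A E : Type*} [NontriviallyNormedField 𝕜] [NormedField A]
  [NormedAddCommGroup E] [NormedSpace 𝕜 E] [NormedSpace A E]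

/-- Two local quotients agree off the zeros of `c`, hence by continuity also at those zeros. -/
theorem contDiff_of_eventually_eq_smul {c : 𝕜 → A} {f : 𝕜 → E} {g : 𝕜 → 𝕜 → E}
    (hc : ∀ x, ∀ᶠ y in 𝓝[≠] x, c y ≠ 0) (hg : ∀ x, AnalyticAt 𝕜 (g x) x)
    (hfg : ∀ x, ∀ᶠ y in 𝓝 x, f y = c y • g x y) : ContDiff 𝕜 ω fun x => g x x := by
  refine contDiff_omega_iff_analyticOnNhd.mpr fun x _ => (hg x).congr ?_
  filter_upwards [(hfg x).eventually_nhds, (hg x).eventually_continuousAt] with y hy hgx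
  have heq : g x =ᶠ[𝓝[≠] y] g y := by
    filter_upwards [hy.filter_mono nhdsWithin_le_nhds, (hfg y).filter_mono nhdsWithin_le_nhds,
      hc y] with z hxz hyz hcz
    exact smul_right_injective E hcz (hxz.symm.trans hyz)
  exact ((hgx.eventuallyEq_nhds_iff_eventuallyEq_nhdsNE (hg y).continuousAt).mp heq).eq_of_nhds

variable [NormedAlgebra 𝕜 A]

theorem eq_of_smul_eq_smul_of_contDiff [PreconnectedSpace 𝕜] {c : 𝕜 → A} {f g : 𝕜 → E}
    (hc : ContDiff 𝕜 ω c) (hf : ContDiff 𝕜 ω f) (hg : ContDiff 𝕜 ω g) (hc0 : c ≠ 0)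
    (h : ∀ x, c x • f x = c x • g x) : f = g := by
  have hsub : ∀ x ∈ univ, c x • (f - g) x = 0 := fun x _ => by
    rw [Pi.sub_apply, smul_sub, h x, sub_self]
  rcases hc.analyticOnNhd.eq_zero_or_eq_zero_of_smul_eq_zero (hf.sub hg).analyticOnNhd hsub
    isPreconnected_univ with hc' | hfg
  · exact absurd (funext fun x => hc' x (mem_univ x)) hc0
  · exact funext fun x => sub_eq_zero.mp (hfg x (mem_univ x))

theorem exists_eventuallyEq_pow_smul_of_deriv_ne_zero [IsScalarTower 𝕜 A E] [CompleteSpace 𝕜]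
    [CharZero 𝕜] {c : 𝕜 → A} {f : 𝕜 → E} {x : 𝕜} (hc : AnalyticAt 𝕜 c x)
    (hcx : c x = 0) (hc' : deriv c x ≠ 0) (hf : AnalyticAt 𝕜 f x) (hfx : analyticOrderAt f x ≠ ⊤) :
    ∃ g : 𝕜 → E, AnalyticAt 𝕜 g x ∧ g x ≠ 0 ∧
      f =ᶠ[𝓝 x] fun y => c y ^ analyticOrderNatAt f x • g y := by
  obtain ⟨k, hk, hkx, hck⟩ := hc.analyticOrderAt_eq_natCast.mp
    (hc.analyticOrderAt_eq_one_of_zero_deriv_ne_zero hcx hc')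
  obtain ⟨g, hg, hgx, hfg⟩ := hf.analyticOrderAt_ne_top.mp hfx
  have hk0 : ∀ᶠ y in 𝓝 x, k y ≠ 0 := hk.continuousAt.eventually_ne hkx
  refine ⟨fun y => (k y ^ analyticOrderNatAt f x)⁻¹ • g y,
    ((hk.pow _).inv (pow_ne_zero _ hkx)).smul hg,
    smul_ne_zero (inv_ne_zero (pow_ne_zero _ hkx)) hgx, ?_⟩
  filter_upwards [hck, hfg, hk0] with y hcy hfy hky
  rw [hcy, hfy, smul_pow, pow_one, smul_assoc, smul_inv_smul₀ (pow_ne_zero _ hky)]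

end Quotients

section Zeros

variable {𝕜 E : Type*} [NontriviallyNormedField 𝕜] [NormedAddCommGroup E] [NormedSpace 𝕜 E]

theorem analyticOrderAt_periodic [CompleteSpace 𝕜] [CharZero 𝕜] {T : 𝕜} {f : 𝕜 → E}
    (hf : Function.Periodic f T) :
    Function.Periodic (analyticOrderAt f) T := fun x => by
  have hshift : analyticOrderAt (f ∘ (· + T)) x = analyticOrderAt f (x + T) :=
    analyticOrderAt_comp_of_deriv_ne_zero (by fun_prop) (by simp)
  exact hshift.symm.trans (congrArg (analyticOrderAt · x) hf.funext)

theorem finite_setOf_mem_Ico_eq_zero [NormedSpace ℝ E] {f : ℝ → E} (hf : ContDiff ℝ ω f)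
    (hf0 : f ≠ 0) (a b : ℝ) :
    {x ∈ Ico a b | f x = 0}.Finite := by
  obtain ⟨x, hx⟩ := Function.ne_iff.mp hf0
  have hcodisc : f ⁻¹' {0}ᶜ ∈ codiscreteWithin (Icc a b) :=
    codiscreteWithin_mono (subset_univ _) (hf.analyticOnNhd.preimage_zero_mem_codiscrete hx)
  refine (isCompact_Icc.finite_sdiff_of_mem_codiscreteWithin hcodisc).subset ?_
  rintro y ⟨hy, hfy⟩
  exact ⟨Ico_subset_Icc_self hy, fun h => h hfy⟩

end Zeros

section Chord

variable {T : ℝ}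

/-- The chord `e^{2πix/T} - e^{2πiz/T}` between two points of the unit circle. As a function of `x`
it is a `T`-periodic substitute for `x - z`: analytic, with simple zeros exactly at `z + Tℤ`. -/
noncomputable def chord (T z x : ℝ) : ℂ :=
  fourier 1 (x : AddCircle T) - fourier 1 (z : AddCircle T)

theorem chord_eq_zero_iff (hT : T ≠ 0) {z x : ℝ} : chord T z x = 0 ↔ (x : AddCircle T) = z := by
  rw [chord, sub_eq_zero, fourier_one, fourier_one, Circle.coe_inj,
    (AddCircle.injective_toCircle hT).eq_iff]

theorem chord_periodic (z : ℝ) : Function.Periodic (chord T z) T := fun x => by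
  rw [chord, AddCircle.coe_add_period, chord]

theorem contDiff_chord (z : ℝ) : ContDiff ℝ ω (chord T z) := by
  have hofReal : ContDiff ℝ ω ((↑) : ℝ → ℂ) := Complex.ofRealCLM.contDiff
  unfold chord
  simp only [fourier_coe_apply]
  fun_prop

theorem deriv_chord_ne_zero (hT : T ≠ 0) (z x : ℝ) : deriv (chord T z) x ≠ 0 := by
  unfold chord
  rw [deriv_sub_const, (hasDerivAt_fourier T 1 x).deriv]
  simp [hT, fourier_apply]

variable {E : Type*} [NormedAddCommGroup E] [NormedSpace ℂ E]

theorem exists_eventuallyEq_prod_chord_pow_smul (hT : T ≠ 0) {f : ℝ → E} {x z : ℝ} {Z : Finset ℝ}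
    {n : ℝ → ℕ} (hf : AnalyticAt ℝ f x) (hfx : analyticOrderAt f x ≠ ⊤)
    (hxz : (x : AddCircle T) = z) (hn : analyticOrderNatAt f x = n z) (hz : z ∉ Z → n z = 0)
    (hZ : ∀ w ∈ Z, (w : AddCircle T) = z → w = z) :
    ∃ g : ℝ → E, AnalyticAt ℝ g x ∧ g x ≠ 0 ∧
      f =ᶠ[𝓝 x] fun y => (∏ w ∈ Z, chord T w y ^ n w) • g y := by
  obtain ⟨g, hg, hgx, hfg⟩ := exists_eventuallyEq_pow_smul_of_deriv_ne_zero
    (contDiff_chord z).contDiffAt.analyticAt ((chord_eq_zero_iff hT).mpr hxz)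
    (deriv_chord_ne_zero hT z x) hf hfx
  let r (y : ℝ) : ℂ := ∏ w ∈ Z.erase z, chord T w y ^ n w
  have hprod (y : ℝ) : ∏ w ∈ Z, chord T w y ^ n w = chord T z y ^ n z * r y := by
    by_cases hzZ : z ∈ Z
    · exact (Finset.mul_prod_erase Z (fun w => chord T w y ^ n w) hzZ).symm
    · simp only [r, hz hzZ, pow_zero, one_mul, Finset.erase_eq_of_notMem hzZ]
  have hr : ContDiff ℝ ω r := contDiff_prod fun w _ => (contDiff_chord w).pow _
  have hrx : r x ≠ 0 := Finset.prod_ne_zero_iff.mpr fun w hw => pow_ne_zero _ fun h =>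
    Finset.ne_of_mem_erase hw <| hZ w (Finset.mem_of_mem_erase hw) <|
      ((chord_eq_zero_iff hT).mp h).symm.trans hxz
  refine ⟨fun y => (r y)⁻¹ • g y, (hr.contDiffAt.analyticAt.inv hrx).smul hg,
    smul_ne_zero (inv_ne_zero hrx) hgx, ?_⟩
  filter_upwards [hfg, hr.continuous.continuousAt.eventually_ne hrx] with y hfy hry
  rw [hfy, hprod, hn, mul_smul, smul_inv_smul₀ hry]

theorem exists_periodic_local_factorization (hT : 0 < T) {f : ℝ → E} (hf : ContDiff ℝ ω f)
    (hfT : Function.Periodic f T) (hf0 : f ≠ 0) :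
    ∃ c : ℝ → ℂ, ContDiff ℝ ω c ∧ Function.Periodic c T ∧
      ∀ x, ∃ g : ℝ → E, AnalyticAt ℝ g x ∧ g x ≠ 0 ∧ f =ᶠ[𝓝 x] fun y => c y • g y := by
  have hfan (x : ℝ) : AnalyticAt ℝ f x := hf.contDiffAt.analyticAt
  have htop (x : ℝ) : analyticOrderAt f x ≠ ⊤ :=
    mt (AnalyticOnNhd.analyticOrderAt_eq_top_iff_eq_zero x hfan).mp hf0
  let n : ℝ → ℕ := analyticOrderNatAt f
  let Z : Finset ℝ := (finite_setOf_mem_Ico_eq_zero hf hf0 0 T).toFinset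
  have hZ (w : ℝ) : w ∈ Z ↔ w ∈ Ico 0 T ∧ f w = 0 := Finite.mem_toFinset _
  refine ⟨fun x => ∏ z ∈ Z, chord T z x ^ n z, contDiff_prod fun z _ => (contDiff_chord z).pow _,
    fun x => by simp only [chord_periodic _ x], fun x => ?_⟩
  have hper : Function.Periodic (fun y : ℝ => ((y : AddCircle T), n y)) T := fun y => by
    simp only [AddCircle.coe_add_period, n, analyticOrderNatAt, analyticOrderAt_periodic hfT y]
  obtain ⟨z, hz, hxz⟩ := hper.exists_mem_Ico₀ hT x
  have hinj : InjOn ((↑) : ℝ → AddCircle T) (Ico 0 T) := fun a ha b hb =>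
    have : Fact (0 < T) := ⟨hT⟩
    (AddCircle.coe_eq_coe_iff_of_mem_Ico (a := 0) (by rwa [zero_add]) (by rwa [zero_add])).mp
  refine exists_eventuallyEq_prod_chord_pow_smul hT.ne' (hfan x) (htop x) (congrArg Prod.fst hxz)
    (congrArg Prod.snd hxz) (fun hzZ => ?_) fun w hw hwz => hinj ((hZ w).mp hw).1 hz hwz
  by_contra hnz
  exact hzZ ((hZ z).mpr ⟨hz, apply_eq_zero_of_analyticOrderNatAt_ne_zero hnz⟩)

theorem exists_periodic_eq_smul_ne_zero (hT : 0 < T) {f : ℝ → E} (hf : ContDiff ℝ ω f)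
    (hfT : Function.Periodic f T) (hf0 : f ≠ 0) :
    ∃ (c : ℝ → ℂ) (q : ℝ → E), ContDiff ℝ ω c ∧ ContDiff ℝ ω q ∧ Function.Periodic q T ∧
      (∀ x, q x ≠ 0) ∧ ∀ x, f x = c x • q x := by
  obtain ⟨c, hc, hcT, hlocal⟩ := exists_periodic_local_factorization hT hf hfT hf0
  choose g hg hg0 hfg using hlocal
  have hfq (x : ℝ) : f x = c x • g x x := (hfg x).eq_of_nhds
  have hc0 : c ≠ 0 := fun h => hf0 <| funext fun x => by simp [hfq x, h]
  have hcan (x : ℝ) : AnalyticAt ℝ c x := hc.contDiffAt.analyticAt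
  have hcne (x : ℝ) : ∀ᶠ y in 𝓝[≠] x, c y ≠ 0 :=
    (hcan x).eventually_eq_zero_or_eventually_ne_zero.resolve_left fun h => hc0 <|
      (AnalyticOnNhd.analyticOrderAt_eq_top_iff_eq_zero x hcan).mp (analyticOrderAt_eq_top.mpr h)
  have hq : ContDiff ℝ ω fun x => g x x := contDiff_of_eventually_eq_smul hcne hg hfg
  refine ⟨c, fun x => g x x, hc, hq, ?_, hg0, hfq⟩
  have hshift : ContDiff ℝ ω fun x => g (x + T) (x + T) := hq.comp (contDiff_id.add contDiff_const)
  refine congrFun (eq_of_smul_eq_smul_of_contDiff hc hshift hq hc0 fun x => ?_)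
  rw [← hfq x, ← hfT x, hfq (x + T), hcT x]

end Chord

theorem span_range_eq_of_le_of_linearIndependent {ι K V : Type*} [Finite ι] [DivisionRing K]
    [AddCommGroup V] [Module K V] {u v : ι → V} (hv : LinearIndependent K v)
    (hle : Submodule.span K (range v) ≤ Submodule.span K (range u)) :
    Submodule.span K (range v) = Submodule.span K (range u) := by
  have := Fintype.ofFinite ι
  have := FiniteDimensional.span_of_finite K (finite_range u)
  refine Submodule.eq_of_le_of_finrank_le hle ?_
  exact (finrank_range_le_card u).trans (finrank_span_eq_card hv).ge

section Frames

variable {E : Type*} [NormedAddCommGroup E] [InnerProductSpace ℂ E] {T : ℝ}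

theorem exists_periodic_eq_smul_norm_eq_one (hT : 0 < T) {f : ℝ → E} (hf : ContDiff ℝ ω f)
    (hfT : Function.Periodic f T) (hf0 : f ≠ 0) :
    ∃ (c : ℝ → ℂ) (e : ℝ → E), ContDiff ℝ ω c ∧ ContDiff ℝ ω e ∧ Function.Periodic e T ∧
      (∀ x, ‖e x‖ = 1) ∧ ∀ x, f x = c x • e x := by
  obtain ⟨c, q, hc, hq, hqT, hq0, hfq⟩ := exists_periodic_eq_smul_ne_zero hT hf hfT hf0
  have hnorm : ContDiff ℝ ω fun x => (‖q x‖ : ℂ) :=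
    Complex.ofRealCLM.contDiff.comp (hq.norm ℂ hq0)
  have hnorm0 (x : ℝ) : (‖q x‖ : ℂ) ≠ 0 := by simpa using hq0 x
  refine ⟨fun x => c x * ‖q x‖, fun x => (‖q x‖ : ℂ)⁻¹ • q x, hc.mul hnorm,
    (hnorm.inv hnorm0).smul hq, fun x => by simp only [hqT x], fun x => ?_, fun x => ?_⟩
  · exact norm_smul_inv_norm (𝕜 := ℂ) (hq0 x)
  · rw [hfq x, smul_smul, mul_inv_cancel_right₀ (hnorm0 x)]

variable {ι : Type*} [Fintype ι]

theorem exists_periodic_orthogonal_unit (hT : 0 < T) {u : ℝ → ι → E} {v : ℝ → E}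
    (hu : ContDiff ℝ ω u) (huT : Function.Periodic u T) (huo : ∀ x, Orthonormal ℂ (u x))
    (hv : ContDiff ℝ ω v) (hvT : Function.Periodic v T)
    (hvu : ∃ x, v x ∉ Submodule.span ℂ (range (u x))) :
    ∃ e : ℝ → E, ContDiff ℝ ω e ∧ Function.Periodic e T ∧ (∀ x, ‖e x‖ = 1) ∧
      (∀ x i, ⟪e x, u x i⟫_ℂ = 0) ∧
      ∀ x, v x ∈ Submodule.span ℂ (insert (e x) (range (u x))) := by
  let proj (x : ℝ) : E := ∑ i, ⟪u x i, v x⟫_ℂ • u x i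
  let w (x : ℝ) : E := v x - proj x
  have hui (i : ι) : ContDiff ℝ ω fun x => u x i := contDiff_pi.mp hu i
  have hw : ContDiff ℝ ω w :=
    hv.sub (ContDiff.sum fun i _ => ((hui i).inner ℂ hv).smul (hui i))
  have hwT : Function.Periodic w T := fun x => by simp only [w, proj, hvT x, huT x]
  have hproj (x : ℝ) : proj x ∈ Submodule.span ℂ (range (u x)) :=
    Submodule.sum_mem _ fun i _ => Submodule.smul_mem _ _ (Submodule.subset_span (mem_range_self i))
  have hw0 : w ≠ 0 := by
    obtain ⟨x, hx⟩ := hvu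
    exact fun h => hx (sub_eq_zero.mp (congrFun h x) ▸ hproj x)
  have hwu (x : ℝ) (i : ι) : ⟪w x, u x i⟫_ℂ = 0 := by
    rw [inner_eq_zero_symm, inner_sub_right, (huo x).inner_right_fintype, sub_self]
  obtain ⟨c, e, hc, he, heT, he1, hwe⟩ := exists_periodic_eq_smul_norm_eq_one hT hw hwT hw0
  have hc0 : c ≠ 0 := fun h => hw0 <| funext fun x => by simp [hwe x, h]
  refine ⟨e, he, heT, he1, fun x i => ?_, fun x => ?_⟩
  · rw [inner_eq_zero_symm]
    refine congrFun (eq_of_smul_eq_smul_of_contDiff hc ((hui i).inner ℂ he) contDiff_const hc0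
      (g := 0) fun y => ?_) x
    rw [smul_eq_mul, ← inner_smul_right, ← hwe y, inner_eq_zero_symm.mp (hwu y i), Pi.zero_apply,
      smul_zero]
  · have hvx : v x = c x • e x + proj x := by rw [← hwe x, sub_add_cancel]
    rw [hvx]
    exact add_mem (Submodule.smul_mem _ _ (Submodule.subset_span (mem_insert _ _)))
      (Submodule.span_mono (subset_insert _ _) (hproj x))

theorem exists_periodic_orthonormal_span_le_fin (hT : 0 < T) {n : ℕ} {v : ℝ → Fin n → E}
    (hv : ContDiff ℝ ω v) (hvT : Function.Periodic v T)
    (hli : ∃ x, LinearIndependent ℂ (v x)) :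
    ∃ u : ℝ → Fin n → E, ContDiff ℝ ω u ∧ Function.Periodic u T ∧ (∀ x, Orthonormal ℂ (u x)) ∧
      ∀ x, Submodule.span ℂ (range (v x)) ≤ Submodule.span ℂ (range (u x)) := by
  induction n with
  | zero =>
    exact ⟨v, hv, hvT, fun x => ⟨isEmptyElim, isEmptyElim⟩, fun x => le_rfl⟩
  | succ n ih =>
    obtain ⟨x₀, hx₀⟩ := hli
    obtain ⟨htail, hhead⟩ := linearIndependent_finSucc.mp hx₀
    obtain ⟨u, hu, huT, huo, hvu⟩ := ih (v := fun x => Fin.tail (v x))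
      (contDiff_pi.mpr fun i => contDiff_pi.mp hv i.succ) (fun x => by simp only [hvT x])
      ⟨x₀, htail⟩
    rw [span_range_eq_of_le_of_linearIndependent htail (hvu x₀)] at hhead
    obtain ⟨e, he, heT, he1, heu, hve⟩ := exists_periodic_orthogonal_unit hT hu huT huo
      (contDiff_pi.mp hv 0) (fun x => by simp only [hvT x]) ⟨x₀, hhead⟩
    refine ⟨fun x => vecCons (e x) (u x), contDiff_pi.mpr (Fin.cases he (contDiff_pi.mp hu)),
      fun x => by simp only [heT x, huT x], fun x => orthonormal_vecCons_iff.mpr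
        ⟨he1 x, heu x, huo x⟩, fun x => ?_⟩
    rw [range_cons, singleton_union, Submodule.span_le]
    rintro _ ⟨i, rfl⟩
    refine Fin.cases (hve x) (fun i => ?_) i
    exact Submodule.span_mono (subset_insert _ _) (hvu x (Submodule.subset_span ⟨i, rfl⟩))

theorem exists_periodic_orthonormal_span_le (hT : 0 < T) {v : ℝ → ι → E}
    (hv : ContDiff ℝ ω v) (hvT : Function.Periodic v T)
    (hli : ∃ x, LinearIndependent ℂ (v x)) :
    ∃ u : ℝ → ι → E, ContDiff ℝ ω u ∧ Function.Periodic u T ∧ (∀ x, Orthonormal ℂ (u x)) ∧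
      ∀ x, Submodule.span ℂ (range (v x)) ≤ Submodule.span ℂ (range (u x)) := by
  let σ := Fintype.equivFin ι
  obtain ⟨u, hu, huT, huo, hvu⟩ := exists_periodic_orthonormal_span_le_fin hT
    (v := fun x => v x ∘ σ.symm) (contDiff_pi.mpr fun i => contDiff_pi.mp hv (σ.symm i))
    (fun x => by simp only [hvT x]) (hli.imp fun x hx => hx.comp _ σ.symm.injective)
  refine ⟨fun x => u x ∘ σ, contDiff_pi.mpr fun i => contDiff_pi.mp hu (σ i),
    fun x => by simp only [huT x], fun x => (huo x).comp _ σ.injective, fun x => ?_⟩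
  simpa only [EquivLike.range_comp] using hvu x

theorem finite_setOf_not_linearIndependent {v : ℝ → ι → E} (hv : ContDiff ℝ ω v)
    (hli : ∃ x, LinearIndependent ℂ (v x)) (a b : ℝ) :
    {x ∈ Ico a b | ¬LinearIndependent ℂ (v x)}.Finite := by
  classical
  have hdet : ContDiff ℝ ω fun x => (gram ℂ (v x)).det := by
    simp only [det_apply', gram_apply]
    exact ContDiff.sum fun σ _ => contDiff_const.mul <| contDiff_prod fun i _ =>
      (contDiff_pi.mp hv (σ i)).inner ℂ (contDiff_pi.mp hv i)
  have hdet0 : (fun x => (gram ℂ (v x)).det) ≠ 0 :=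
    let ⟨x, hx⟩ := hli
    fun h => det_gram_ne_zero_iff_linearIndependent.mpr hx (congrFun h x)
  simpa only [← det_gram_ne_zero_iff_linearIndependent, not_not] using
    finite_setOf_mem_Ico_eq_zero hdet hdet0 a b

end Frames

section Columns

variable {m n 𝕜 : Type*} [RCLike 𝕜]

/-- The `j`-th column of `A` as a vector of Euclidean space: columns of a matrix are plain functions
`m → 𝕜`, which carry no inner product. -/
def euclideanCol (A : Matrix m n 𝕜) (j : n) : EuclideanSpace 𝕜 m :=
  WithLp.toLp 2 (A.col j)

theorem gram_euclideanCol [Fintype m] (A : Matrix m n 𝕜) : gram 𝕜 (euclideanCol A) = Aᴴ * A := by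
  ext i j
  simp [euclideanCol, gram_apply, mul_apply, PiLp.inner_apply, mul_comm]

theorem conjTranspose_mul_self_eq_one_iff [Fintype m] [DecidableEq n] {A : Matrix m n 𝕜} :
    Aᴴ * A = 1 ↔ Orthonormal 𝕜 (euclideanCol A) := by
  rw [← gram_euclideanCol, gram_eq_one_iff_orthonormal]

variable [Fintype n]

theorem span_range_euclideanCol (A : Matrix m n 𝕜) :
    Submodule.span 𝕜 (range (euclideanCol A)) =
      (LinearMap.range A.mulVecLin).map (WithLp.linearEquiv 2 𝕜 (m → 𝕜)).symm.toLinearMap := by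
  rw [range_mulVecLin, Submodule.map_span, ← range_comp]
  rfl

theorem range_mulVecLin_le_iff {A B : Matrix m n 𝕜} :
    LinearMap.range A.mulVecLin ≤ LinearMap.range B.mulVecLin ↔
      Submodule.span 𝕜 (range (euclideanCol A)) ≤ Submodule.span 𝕜 (range (euclideanCol B)) := by
  rw [span_range_euclideanCol, span_range_euclideanCol,
    Submodule.map_le_map_iff_of_injective (LinearEquiv.injective _)]

theorem rank_eq_card_iff_linearIndependent {A : Matrix m n 𝕜} :
    A.rank = Fintype.card n ↔ LinearIndependent 𝕜 (euclideanCol A) := by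
  rw [linearIndependent_iff_card_eq_finrank_span, Set.finrank, span_range_euclideanCol,
    LinearEquiv.finrank_map_eq, rank, eq_comm]

theorem contDiff_euclideanCol_iff [Fintype m] {A : ℝ → Matrix m n 𝕜} :
    ContDiff ℝ ω (fun x => euclideanCol (A x)) ↔ ∀ x i j, AnalyticAt ℝ (fun t => A t i j) x := by
  refine ⟨fun h x i j => ?_, fun h => contDiff_pi.mpr fun j => (contDiff_piLp 2).mpr fun i => ?_⟩
  · exact ((contDiff_piLp 2).mp (contDiff_pi.mp h j) i).contDiffAt.analyticAt
  · exact contDiff_omega_iff_analyticOnNhd.mpr fun x _ => h x i j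

end Columns

theorem stmt_11_general {m n : Type*} [Fintype m] [Fintype n] [DecidableEq n] {T : ℝ} (hT : 0 < T)
    (M : ℝ → Matrix m n ℂ) (hM_per : Function.Periodic M T)
    (hM_an : ∀ (x : ℝ) (i : m) (j : n), AnalyticAt ℝ (fun t => M t i j) x)
    (hM_rank : ∃ x : ℝ, (M x).rank = Fintype.card n) :
    {x ∈ Set.Ico (0:ℝ) T | (M x).rank ≠ Fintype.card n}.Finite ∧
    ∃ N : ℝ → Matrix m n ℂ,
      Function.Periodic N T ∧
      (∀ (x : ℝ) (i : m) (j : n), AnalyticAt ℝ (fun t => N t i j) x) ∧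
      (∀ x : ℝ, (N x)ᴴ * N x = 1) ∧
      (∀ x : ℝ, LinearMap.range (Matrix.mulVecLin (M x))
          ≤ LinearMap.range (Matrix.mulVecLin (N x))) ∧
      (∀ x : ℝ, (M x).rank = Fintype.card n →
        LinearMap.range (Matrix.mulVecLin (M x))
          = LinearMap.range (Matrix.mulVecLin (N x))) := by
  have hcol := contDiff_euclideanCol_iff.mpr hM_an
  simp only [ne_eq, rank_eq_card_iff_linearIndependent, range_mulVecLin_le_iff] at hM_rank ⊢
  obtain ⟨u, hu, huT, huo, hMu⟩ := exists_periodic_orthonormal_span_le hT hcol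
    (fun x => by simp only [hM_per x]) hM_rank
  let N (x : ℝ) : Matrix m n ℂ := of fun i j => u x j i
  refine ⟨finite_setOf_not_linearIndependent hcol hM_rank 0 T, N,
    fun x => by simp only [N, huT x], contDiff_euclideanCol_iff.mp hu,
    fun x => conjTranspose_mul_self_eq_one_iff.mpr (huo x), hMu, fun x hx => ?_⟩
  have heq := span_range_eq_of_le_of_linearIndependent hx (hMu x)
  exact le_antisymm (range_mulVecLin_le_iff.mpr (hMu x)) (range_mulVecLin_le_iff.mpr heq.ge)

/-- If `M : ℝ → ℂ^{d×k}` is real analytic, 1-periodic and of maximal rank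
`k` somewhere (hence everywhere rank `≤ k`), then there is a real analytic 1-periodic
`N : ℝ → ℂ^{d×k}` with orthonormal columns (`N(x)*N(x) = 1`), whose column span contains
the column span of `M(x)` for all `x`, with equality whenever `rank M(x) = k`; moreover
`rank M(x) = k` holds for all but finitely many `x` in a period. -/
theorem stmt_11 {d k : ℕ} (M : ℝ → Matrix (Fin d) (Fin k) ℂ)
    (hM_per : Function.Periodic M 1)
    (hM_an : ∀ (x : ℝ) (i : Fin d) (j : Fin k), AnalyticAt ℝ (fun t => M t i j) x)
    (hM_rank : ∃ x : ℝ, (M x).rank = k) :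
    {x ∈ Set.Ico (0:ℝ) 1 | (M x).rank ≠ k}.Finite ∧
    ∃ N : ℝ → Matrix (Fin d) (Fin k) ℂ,
      Function.Periodic N 1 ∧
      (∀ (x : ℝ) (i : Fin d) (j : Fin k), AnalyticAt ℝ (fun t => N t i j) x) ∧
      (∀ x : ℝ, (N x)ᴴ * N x = 1) ∧
      (∀ x : ℝ, LinearMap.range (Matrix.mulVecLin (M x))
          ≤ LinearMap.range (Matrix.mulVecLin (N x))) ∧
      (∀ x : ℝ, (M x).rank = k →
        LinearMap.range (Matrix.mulVecLin (M x))
          = LinearMap.range (Matrix.mulVecLin (N x))) := by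
  simpa only [Fintype.card_fin] using stmt_11_general one_pos M hM_per hM_an
    (by simpa only [Fintype.card_fin] using hM_rank)
end

section
/- Let A : ℝ → ℂ^{d×d} be real analytic and 1-periodic, and let P : ℝ → ℂ^{d×d} be real analytic and 1-periodic with each P(x) an orthogonal projection (P(x)² = P(x) = P(x)*) of rank k. If the dimension of the image subspace A(x)(ran P(x)) ⊆ ℂ^d is constant in x, then the map assigning to x the orthogonal projection onto A(x)(ran P(x)) is real analytic and 1-periodic. -/
open MeasureTheory Filter Topology Matrix

/-- `P` is an orthogonal projection matrix (w.r.t. the Hermitian inner product). -/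
def IsOrthProj {d : ℕ} (P : Matrix (Fin d) (Fin d) ℂ) : Prop :=
  P * P = P ∧ Pᴴ = P

/-- The range (column span) of a matrix, as a subspace of `ℂ^d`. -/
noncomputable def matRange {d e : ℕ} (M : Matrix (Fin d) (Fin e) ℂ) : Submodule ℂ (Fin d → ℂ) :=
  LinearMap.range M.mulVecLin

/-!
Near a point `x`, a choice of columns of `M x` that is a basis of the range of `M x` stays linearly
independent, and when the rank of `M` does not jump it stays a basis of the range. If `C t` is the
matrix formed by these columns of `M t`, the orthogonal projection onto the range of `M t` is thus
`C (Cᴴ C)⁻¹ Cᴴ`, which by Cramer's rule is analytic in `t`. For the theorem, take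
`M x = A x * P x`.
-/

section AnalyticMatAt

variable {𝕂 E R F l m n : Type*} [NontriviallyNormedField 𝕂] [NormedAddCommGroup E]
  [NormedSpace 𝕂 E]

variable (𝕂) in
/-- Analyticity of a matrix-valued map at a point. It is stated entrywise, so that no norm on
matrices has to be chosen. -/
def AnalyticMatAt [NormedAddCommGroup F] [NormedSpace 𝕂 F] (M : E → Matrix m n F) (x : E) : Prop :=
  ∀ i j, AnalyticAt 𝕂 (fun t ↦ M t i j) x

namespace AnalyticMatAt

section Module

variable [NormedAddCommGroup F] [NormedSpace 𝕂 F] {M N : E → Matrix m n F} {x : E}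

lemma congr (hM : AnalyticMatAt 𝕂 M x) (h : M =ᶠ[𝓝 x] N) : AnalyticMatAt 𝕂 N x :=
  fun i j ↦ (hM i j).congr (h.fun_comp fun A ↦ A i j)

lemma submatrix {m' n' : Type*} (hM : AnalyticMatAt 𝕂 M x) (r : m' → m) (c : n' → n) :
    AnalyticMatAt 𝕂 (fun t ↦ (M t).submatrix r c) x :=
  fun i j ↦ hM (r i) (c j)

lemma conjTranspose [StarRing 𝕂] [TrivialStar 𝕂] [StarAddMonoid F] [ContinuousStar F]
    [StarModule 𝕂 F] (hM : AnalyticMatAt 𝕂 M x) : AnalyticMatAt 𝕂 (fun t ↦ (M t)ᴴ) x :=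
  fun i j ↦ ((starL' 𝕂 : F ≃L[𝕂] F).toContinuousLinearMap.analyticAt _).comp (hM j i)

lemma continuousAt (hM : AnalyticMatAt 𝕂 M x) : ContinuousAt M x :=
  continuousAt_pi.2 fun i ↦ continuousAt_pi.2 fun j ↦ (hM i j).continuousAt

end Module

lemma mul [NormedRing R] [NormedAlgebra 𝕂 R] [Fintype m] {M : E → Matrix l m R}
    {N : E → Matrix m n R} {x : E} (hM : AnalyticMatAt 𝕂 M x) (hN : AnalyticMatAt 𝕂 N x) :
    AnalyticMatAt 𝕂 (fun t ↦ M t * N t) x := by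
  intro i j
  simp only [mul_apply]
  exact Finset.analyticAt_fun_sum _ fun k _ ↦ (hM i k).mul (hN k j)

section Square

variable [Fintype n] [DecidableEq n] {x : E}

lemma det [NormedCommRing R] [NormedAlgebra 𝕂 R] {M : E → Matrix n n R}
    (hM : AnalyticMatAt 𝕂 M x) : AnalyticAt 𝕂 (fun t ↦ (M t).det) x := by
  simp only [det_apply']
  exact Finset.analyticAt_fun_sum _ fun σ _ ↦
    analyticAt_const.mul (Finset.analyticAt_fun_prod _ fun i _ ↦ hM (σ i) i)

lemma adjugate [NormedCommRing R] [NormedAlgebra 𝕂 R] {M : E → Matrix n n R}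
    (hM : AnalyticMatAt 𝕂 M x) : AnalyticMatAt 𝕂 (fun t ↦ (M t).adjugate) x := by
  intro i j
  simp only [adjugate_apply]
  refine det fun a b ↦ ?_
  obtain rfl | hne := eq_or_ne a j
  · simpa only [updateRow_self] using analyticAt_const
  · simpa only [updateRow_ne hne] using hM a b

lemma inv [NormedField R] [NormedAlgebra 𝕂 R] {M : E → Matrix n n R}
    (hM : AnalyticMatAt 𝕂 M x) (hx : IsUnit (M x)) : AnalyticMatAt 𝕂 (fun t ↦ (M t)⁻¹) x := by
  intro i j
  simp only [inv_def, Ring.inverse_eq_inv', Matrix.smul_apply, smul_eq_mul]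
  exact (hM.det.inv ((isUnit_iff_isUnit_det _).1 hx).ne_zero).mul (hM.adjugate i j)

end Square

end AnalyticMatAt

end AnalyticMatAt

section ColumnBasis

variable {K m n : Type*} [Field K] [Fintype n]

lemma exists_linearIndependent_col_submatrix (M : Matrix m n K) :
    ∃ c : Fin M.rank → n, LinearIndependent K (M.submatrix id c).col := by
  obtain ⟨κ, c, hc, hspan, hli⟩ := exists_linearIndependent' K M.col
  have := Finite.of_injective c hc
  have := Fintype.ofFinite κ
  have hcard : Fintype.card κ = M.rank := by
    rw [← finrank_span_eq_card hli, hspan, rank_eq_finrank_span_cols]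
  let e := Fintype.equivFinOfCardEq hcard
  exact ⟨c ∘ e.symm, hli.comp e.symm e.symm.injective⟩

lemma range_mulVecLin_submatrix_of_card_eq_rank {κ : Type*} [Fintype κ] [Finite m]
    {M : Matrix m n K} {c : κ → n} (hli : LinearIndependent K (M.submatrix id c).col)
    (hcard : Fintype.card κ = M.rank) :
    LinearMap.range (M.submatrix id c).mulVecLin = LinearMap.range M.mulVecLin := by
  rw [range_mulVecLin, range_mulVecLin]
  refine Submodule.eq_of_le_of_finrank_eq
    (Submodule.span_mono (Set.range_comp_subset_range c M.col)) ?_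
  rw [finrank_span_eq_card hli, hcard, rank_eq_finrank_span_cols]

end ColumnBasis

open scoped ComplexOrder in
lemma isUnit_conjTranspose_mul_self {𝕜 m n : Type*} [RCLike 𝕜] [Fintype m] [Fintype n]
    [DecidableEq n] {C : Matrix m n 𝕜} (hC : LinearIndependent 𝕜 C.col) :
    IsUnit (Cᴴ * C) :=
  (PosDef.conjTranspose_mul_self C (mulVec_injective_iff.2 hC)).isUnit

section OrthProjMatrix

variable {𝕜 m n : Type*} [RCLike 𝕜] [Fintype m] [DecidableEq m] [Fintype n]

/-- The matrix of the orthogonal projection onto a subspace `V` of `𝕜ᵐ`. As `m → 𝕜` carries the sup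
norm, the projection is taken in `EuclideanSpace 𝕜 m`. -/
noncomputable def orthProjMatrix (V : Submodule 𝕜 (m → 𝕜)) : Matrix m m 𝕜 :=
  (toEuclideanCLM (𝕜 := 𝕜) (n := m)).symm
    (V.comap (WithLp.linearEquiv 2 𝕜 (m → 𝕜)).toLinearMap).starProjection

lemma range_toEuclideanCLM (M : Matrix m m 𝕜) :
    (toEuclideanCLM (𝕜 := 𝕜) M).range =
      (LinearMap.range M.mulVecLin).comap (WithLp.linearEquiv 2 𝕜 (m → 𝕜)).toLinearMap := by
  ext v
  constructor
  · rintro ⟨w, rfl⟩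
    exact ⟨w.ofLp, rfl⟩
  · rintro ⟨w, hw⟩
    exact ⟨WithLp.toLp 2 w, congrArg (WithLp.toLp 2) hw⟩

lemma isStarProjection_orthProjMatrix (V : Submodule 𝕜 (m → 𝕜)) :
    IsStarProjection (orthProjMatrix V) :=
  isStarProjection_starProjection.map (toEuclideanCLM (𝕜 := 𝕜) (n := m)).symm

lemma range_mulVecLin_orthProjMatrix (V : Submodule 𝕜 (m → 𝕜)) :
    LinearMap.range (orthProjMatrix V).mulVecLin = V := by
  apply Submodule.comap_injective_of_surjective (WithLp.linearEquiv 2 𝕜 (m → 𝕜)).surjective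
  rw [← range_toEuclideanCLM, orthProjMatrix, StarAlgEquiv.apply_symm_apply,
    Submodule.range_starProjection]

lemma orthProjMatrix_range_of_isStarProjection {Q : Matrix m m 𝕜} (hQ : IsStarProjection Q) :
    orthProjMatrix (LinearMap.range Q.mulVecLin) = Q := by
  refine EquivLike.injective (toEuclideanCLM (𝕜 := 𝕜) (n := m)) ?_
  refine ContinuousLinearMap.IsStarProjection.ext
    ((isStarProjection_orthProjMatrix _).map toEuclideanCLM) (hQ.map toEuclideanCLM) ?_
  rw [range_toEuclideanCLM, range_mulVecLin_orthProjMatrix, range_toEuclideanCLM]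

lemma orthProjMatrix_range_of_linearIndependent_col [DecidableEq n] {C : Matrix m n 𝕜}
    (hC : LinearIndependent 𝕜 C.col) :
    orthProjMatrix (LinearMap.range C.mulVecLin) = C * (Cᴴ * C)⁻¹ * Cᴴ := by
  set Q := C * (Cᴴ * C)⁻¹ * Cᴴ
  have hQC : Q * C = C := by
    rw [Matrix.mul_assoc, Matrix.mul_assoc,
      nonsing_inv_mul _ ((isUnit_iff_isUnit_det _).1 (isUnit_conjTranspose_mul_self hC)),
      Matrix.mul_one]
  have hQ : IsStarProjection Q := by
    constructor
    · rw [IsIdempotentElem, ← Matrix.mul_assoc, ← Matrix.mul_assoc, hQC]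
    · simp [Q, isSelfAdjoint_iff, star_eq_conjTranspose, conjTranspose_nonsing_inv,
        Matrix.mul_assoc]
  have hrange : LinearMap.range Q.mulVecLin = LinearMap.range C.mulVecLin := by
    apply le_antisymm
    · rw [show Q = C * ((Cᴴ * C)⁻¹ * Cᴴ) from Matrix.mul_assoc .., mulVecLin_mul]
      exact LinearMap.range_comp_le_range _ _
    · conv_lhs => rw [← hQC, mulVecLin_mul]
      exact LinearMap.range_comp_le_range _ _
  rw [← hrange, orthProjMatrix_range_of_isStarProjection hQ]

lemma AnalyticMatAt.orthProjMatrix_range {E : Type*} [NormedAddCommGroup E] [NormedSpace ℝ E]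
    {M : E → Matrix m n 𝕜} {x : E} (hM : AnalyticMatAt ℝ M x)
    (hrank : ∀ᶠ t in 𝓝 x, (M t).rank = (M x).rank) :
    AnalyticMatAt ℝ (fun t ↦ orthProjMatrix (LinearMap.range (M t).mulVecLin)) x := by
  obtain ⟨c, hc⟩ := exists_linearIndependent_col_submatrix (M x)
  let C t := (M t).submatrix id c
  have hC : AnalyticMatAt ℝ C x := hM.submatrix id c
  have hformula : AnalyticMatAt ℝ (fun t ↦ C t * ((C t)ᴴ * C t)⁻¹ * (C t)ᴴ) x :=
    (hC.mul ((hC.conjTranspose.mul hC).inv (isUnit_conjTranspose_mul_self hc))).mul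
      hC.conjTranspose
  have hli : ∀ᶠ t in 𝓝 x, LinearIndependent 𝕜 (C t).col :=
    (continuous_id.matrix_transpose.continuousAt.comp hC.continuousAt).eventually
      (isOpen_setOfPred_linearIndependent.mem_nhds hc)
  refine hformula.congr ?_
  filter_upwards [hli, hrank] with t hlit hrankt
  rw [← range_mulVecLin_submatrix_of_card_eq_rank hlit (by rw [Fintype.card_fin, hrankt]),
    orthProjMatrix_range_of_linearIndependent_col hlit]

end OrthProjMatrix

section Periodic

variable {d e f : ℕ}

lemma AnalyticPeriodicMat.mul {A : ℝ → Matrix (Fin d) (Fin e) ℂ} {B : ℝ → Matrix (Fin e) (Fin f) ℂ}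
    (hA : AnalyticPeriodicMat A) (hB : AnalyticPeriodicMat B) :
    AnalyticPeriodicMat fun x ↦ A x * B x :=
  ⟨fun x ↦ congrArg₂ (· * ·) (hA.1 x) (hB.1 x), fun x ↦ AnalyticMatAt.mul (hA.2 x) (hB.2 x)⟩

lemma matRange_mul (A : Matrix (Fin d) (Fin e) ℂ) (B : Matrix (Fin e) (Fin f) ℂ) :
    matRange (A * B) = (matRange B).map A.mulVecLin := by
  rw [matRange, matRange, mulVecLin_mul, LinearMap.range_comp]

theorem stmt_12_general {M : ℝ → Matrix (Fin d) (Fin e) ℂ} (hM : AnalyticPeriodicMat M)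
    (hrank : ∃ r : ℕ, ∀ x : ℝ, (M x).rank = r) :
    ∃ Q : ℝ → Matrix (Fin d) (Fin d) ℂ,
      AnalyticPeriodicMat Q ∧ ∀ x : ℝ, IsOrthProj (Q x) ∧ matRange (Q x) = matRange (M x) := by
  obtain ⟨r, hr⟩ := hrank
  refine ⟨fun x ↦ orthProjMatrix (matRange (M x)), ⟨?periodic, ?analytic⟩, fun x ↦ ⟨?proj, ?range⟩⟩
  case periodic => exact hM.1.comp fun N ↦ orthProjMatrix (matRange N)
  case analytic =>
    exact fun x ↦ AnalyticMatAt.orthProjMatrix_range (hM.2 x)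
      (.of_forall fun t ↦ (hr t).trans (hr x).symm)
  case proj => exact isStarProjection_iff'.1 (isStarProjection_orthProjMatrix (matRange (M x)))
  case range => exact range_mulVecLin_orthProjMatrix (matRange (M x))

end Periodic

/-- If `A(x)` is analytic 1-periodic and `P(x)` is an analytic 1-periodic
family of orthogonal projections of rank `k`, and the dimension of the image
`A(x)(ran P(x))` is constant in `x`, then the family of orthogonal projections onto
`A(x)(ran P(x))` is real analytic and 1-periodic. -/
theorem stmt_12 {d k : ℕ} (A P : ℝ → Matrix (Fin d) (Fin d) ℂ)
    (hA : AnalyticPeriodicMat A)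
    (hP : AnalyticPeriodicMat P)
    (hPproj : ∀ x : ℝ, IsOrthProj (P x))
    (hPrank : ∀ x : ℝ, (P x).rank = k)
    (hconst : ∃ m : ℕ, ∀ x : ℝ,
      Module.finrank ℂ ((matRange (P x)).map (A x).mulVecLin) = m) :
    ∃ Q : ℝ → Matrix (Fin d) (Fin d) ℂ,
      AnalyticPeriodicMat Q ∧
      ∀ x : ℝ, IsOrthProj (Q x) ∧
        matRange (Q x) = (matRange (P x)).map (A x).mulVecLin := by
  obtain ⟨r, hr⟩ := hconst
  simpa only [matRange_mul] using stmt_12_general (hA.mul hP)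
    ⟨r, fun x ↦ by rw [rank, ← hr x, ← matRange_mul, matRange]⟩
end

section
/- Let U ⊆ ℝ^ℓ be open and connected and let g : U → ℂ be real analytic and not identically zero. Then ln|g| is locally Lebesgue integrable on U; that is, every point x₀ ∈ U has a neighborhood V ⊆ U with ∫_V |ln|g(x)|| dx < ∞ (in particular ∫_V ln|g(x)| dx > −∞). -/
open MeasureTheory Filter Topology

/-!
By the identity theorem `g` does not vanish identically near `x₀`, so neither does some real-valued
`f = φ ∘ g` with `φ` a functional of norm at most one, and some iterated derivative of `f` along a
fixed direction `v` is nonzero at `x₀`, hence bounded below near `x₀`. On every line parallel to `v`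
the sublevel sets of `f` are then small, by a sublevel estimate of van der Corput type whose
constant depends only on the order `k` of the derivative. Averaging over translates along `v` turns
this into `μ {|f| < c * η ^ k} ≤ C * η` near `x₀`. As `|f| ≤ ‖g‖`, the negative part of `log ‖g‖`
has exponentially small tails, and is therefore integrable.
-/

section SublevelEstimate

lemma volume_abs_lt_le_of_mul_sub_le {G : ℝ → ℝ} {J : Set ℝ} {c : ℝ} (hc : 0 < c)
    (hG : ∀ s ∈ J, ∀ t ∈ J, s ≤ t → c * (t - s) ≤ G t - G s) (δ : ℝ) :
    volume {t ∈ J | |G t| < δ} ≤ ENNReal.ofReal (2 * δ / c) := by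
  have sub_le : ∀ s ∈ {t ∈ J | |G t| < δ}, ∀ t ∈ {t ∈ J | |G t| < δ}, s ≤ t →
      t - s ≤ 2 * δ / c := by
    rintro s ⟨hsJ, hs⟩ t ⟨htJ, ht⟩ hst
    rw [le_div_iff₀' hc]
    linarith [hG s hsJ t htJ hst, (abs_lt.1 hs).1, (abs_lt.1 ht).2]
  refine (Real.volume_le_diam _).trans (Metric.ediam_le_of_forall_dist_le fun s hs t ht ↦ ?_)
  rcases le_total s t with hst | hts
  · rw [dist_comm, Real.dist_eq, abs_of_nonneg (sub_nonneg.2 hst)]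
    exact sub_le s hs t ht hst
  · rw [Real.dist_eq, abs_of_nonneg (sub_nonneg.2 hts)]
    exact sub_le t ht s hs hts

lemma mul_sub_le_image_sub_of_le_hasDerivWithinAt {J : Set ℝ} (hJ : Convex ℝ J) {G G' : ℝ → ℝ}
    {c : ℝ} (hG : ∀ t ∈ J, HasDerivWithinAt G (G' t) J t) (hG' : ∀ t ∈ J, c ≤ G' t) :
    ∀ s ∈ J, ∀ t ∈ J, s ≤ t → c * (t - s) ≤ G t - G s := by
  have hasDerivAt : ∀ t ∈ interior J, HasDerivAt G (G' t) t := fun t ht ↦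
    (hG t (interior_subset ht)).hasDerivAt (mem_interior_iff_mem_nhds.1 ht)
  refine hJ.mul_sub_le_image_sub_of_le_deriv (fun t ht ↦ (hG t ht).continuousWithinAt)
    (fun t ht ↦ (hasDerivAt t ht).differentiableAt.differentiableWithinAt) fun t ht ↦ ?_
  rw [(hasDerivAt t ht).deriv]
  exact hG' t (interior_subset ht)

lemma measure_sep_le_add_add {α : Type*} [MeasurableSpace α] (μ : Measure α) (J : Set α)
    (b : α → ℝ) (δ : ℝ) {p : α → Prop} :
    μ {t ∈ J | p t} ≤ μ {t ∈ {t ∈ J | δ ≤ b t} | p t} + μ {t ∈ {t ∈ J | b t ≤ -δ} | p t} +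
      μ {t ∈ J | |b t| < δ} := by
  have cover : {t ∈ J | p t} ⊆ ({t ∈ {t ∈ J | δ ≤ b t} | p t} ∪ {t ∈ {t ∈ J | b t ≤ -δ} | p t}) ∪
      {t ∈ J | |b t| < δ} := by
    rintro t ⟨htJ, ht⟩
    rcases lt_or_ge |b t| δ with h | h
    · exact .inr ⟨htJ, h⟩
    · rcases le_abs'.1 h with h | h
      · exact .inl (.inr ⟨⟨htJ, h⟩, ht⟩)
      · exact .inl (.inl ⟨⟨htJ, h⟩, ht⟩)
  exact (measure_mono cover).trans <| (measure_union_le _ _).trans <|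
    add_le_add_left (measure_union_le _ _) _

theorem volume_abs_lt_mul_pow_le {k : ℕ} {F : ℕ → ℝ → ℝ} {J : Set ℝ} (hJ : Convex ℝ J) {c η : ℝ}
    (hc : 0 < c) (hη : 0 < η)
    (hF : ∀ i < k, ∀ t ∈ J, HasDerivWithinAt (F i) (F (i + 1) t) J t) (hFk : ∀ t ∈ J, c ≤ F k t) :
    volume {t ∈ J | |F 0 t| < c * η ^ k} ≤ ENNReal.ofReal ((2 ^ (k + 1) - 2) * η) := by
  induction k generalizing F J c with
  | zero =>
    have sublevel_empty : {t ∈ J | |F 0 t| < c * η ^ 0} = ∅ := by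
      refine Set.eq_empty_of_forall_notMem fun t ht ↦ ?_
      rw [pow_zero, mul_one] at ht
      exact ht.2.not_ge ((hFk t ht.1).trans (le_abs_self _))
    rw [sublevel_empty, measure_empty]
    exact zero_le
  | succ k ih =>
    have slope := mul_sub_le_image_sub_of_le_hasDerivWithinAt hJ (hF k k.lt_succ_self) hFk
    have mono : MonotoneOn (F k) J := fun s hs t ht hst ↦ by
      nlinarith [slope s hs t ht hst, mul_nonneg hc.le (sub_nonneg.2 hst)]
    simp only [pow_succ' η, ← mul_assoc]
    -- Monotonicity makes `{c * η ≤ F k}` and `{F k ≤ -(c * η)}` convex, so induction applies there.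
    have upper := ih (mono.convex_ge hJ (c * η)) (mul_pos hc hη)
      (fun i hi t ht ↦ (hF i (by lia) t ht.1).mono (Set.sep_subset _ _)) fun t ht ↦ ht.2
    have lower := ih (F := fun i t ↦ -F i t) (mono.convex_le hJ (-(c * η))) (mul_pos hc hη)
      (fun i hi t ht ↦ ((hF i (by lia) t ht.1).mono (Set.sep_subset _ _)).neg)
      fun t ht ↦ le_neg_of_le_neg ht.2
    simp only [abs_neg] at lower
    have middle := volume_abs_lt_le_of_mul_sub_le hc slope (c * η)
    have coeff_nonneg : (0 : ℝ) ≤ 2 ^ (k + 1) - 2 := by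
      rw [pow_succ]
      linarith [one_le_pow₀ one_le_two (M₀ := ℝ) (n := k)]
    calc volume {t ∈ J | |F 0 t| < c * η * η ^ k}
        ≤ ENNReal.ofReal ((2 ^ (k + 1) - 2) * η) + ENNReal.ofReal ((2 ^ (k + 1) - 2) * η) +
            ENNReal.ofReal (2 * (c * η) / c) :=
          (measure_sep_le_add_add _ J (F k) (c * η)).trans <|
            add_le_add (add_le_add upper lower) middle
      _ = ENNReal.ofReal ((2 ^ (k + 1 + 1) - 2) * η) := by
          rw [← ENNReal.ofReal_add (by positivity) (by positivity),
            ← ENNReal.ofReal_add (by positivity) (by positivity)]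
          congr 1
          field_simp
          ring

variable {E : Type*} [NormedAddCommGroup E] [NormedSpace ℝ E]

lemma hasDerivAt_iteratedFDeriv_add_smul {F : Type*} [NormedAddCommGroup F] [NormedSpace ℝ F]
    {f : E → F} {x v : E} {t : ℝ} {n : ℕ} (hf : ContDiffAt ℝ (n + 1) f (x + t • v)) :
    HasDerivAt (fun s : ℝ ↦ iteratedFDeriv ℝ n f (x + s • v) fun _ ↦ v)
      (iteratedFDeriv ℝ (n + 1) f (x + t • v) fun _ ↦ v) t := by
  have differentiableAt : DifferentiableAt ℝ (fun y ↦ iteratedFDeriv ℝ n f y fun _ ↦ v)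
      (x + t • v) :=
    (hf.differentiableAt_iteratedFDeriv
      (by exact_mod_cast n.lt_succ_self)).continuousMultilinear_apply_const _
  have differentiableAt_line : DifferentiableAt ℝ (fun s : ℝ ↦ x + s • v) t := by fun_prop
  rw [← hf.deriv_fderiv_add_smul]
  exact (differentiableAt.comp t differentiableAt_line).hasDerivAt

variable [MeasurableSpace E] [BorelSpace E] [SecondCountableTopology E]
  {μ : Measure E} [SFinite μ] [μ.IsAddRightInvariant]

/- Translation invariance gives `μ S = ∫ t in 0..1, μ {x | x + t • v ∈ S}`; swap the integrals. -/
lemma measure_le_mul_measure_cthickening {S : Set E} (hS : MeasurableSet S) {v : E}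
    {A : ENNReal} (hA : ∀ x, volume {t : ℝ | x + t • v ∈ S} ≤ A) :
    μ S ≤ A * μ (Metric.cthickening ‖v‖ S) := by
  let P : Set (E × ℝ) := {p | p.1 + p.2 • v ∈ S}
  have hP : MeasurableSet P := hS.preimage (by fun_prop)
  have section_le (x : E) : volume.restrict (Set.Icc (0 : ℝ) 1) (Prod.mk x ⁻¹' P) ≤
      (Metric.cthickening ‖v‖ S).indicator (fun _ ↦ A) x := by
    by_cases hx : x ∈ Metric.cthickening ‖v‖ S
    · rw [Set.indicator_of_mem hx]
      exact (Measure.restrict_apply_le _ _).trans (hA x)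
    · rw [Set.indicator_of_notMem hx, Measure.restrict_apply' measurableSet_Icc]
      refine (measure_mono_null ?_ measure_empty).le
      rintro t ⟨htS, ht0, ht1⟩
      refine hx (Metric.mem_cthickening_of_dist_le x (x + t • v) _ S htS ?_)
      rw [dist_self_add_right, norm_smul, Real.norm_of_nonneg ht0]
      exact mul_le_of_le_one_left (norm_nonneg v) ht1
  calc μ S = ∫⁻ t in Set.Icc (0 : ℝ) 1, μ ((· + t • v) ⁻¹' S) := by
        simp [measure_preimage_add_right]
    _ = μ.prod (volume.restrict (Set.Icc (0 : ℝ) 1)) P := (Measure.prod_apply_symm hP).symm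
    _ = ∫⁻ x, volume.restrict (Set.Icc (0 : ℝ) 1) (Prod.mk x ⁻¹' P) ∂μ := Measure.prod_apply hP
    _ ≤ ∫⁻ x, (Metric.cthickening ‖v‖ S).indicator (fun _ ↦ A) x ∂μ := lintegral_mono section_le
    _ ≤ A * μ (Metric.cthickening ‖v‖ S) := lintegral_indicator_const_le _ _

theorem measure_abs_lt_mul_pow_le {B : Set E} (hBo : IsOpen B) (hBc : Convex ℝ B) {f : E → ℝ}
    {k : ℕ} (hf : ContDiffOn ℝ k f B) {v : E} {c η : ℝ} (hc : 0 < c) (hη : 0 < η)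
    (hk : ∀ x ∈ B, c ≤ iteratedFDeriv ℝ k f x fun _ ↦ v) :
    μ {x ∈ B | |f x| < c * η ^ k} ≤
      ENNReal.ofReal ((2 ^ (k + 1) - 2) * η) * μ (Metric.cthickening ‖v‖ B) := by
  have measurable_sublevel : MeasurableSet {x ∈ B | |f x| < c * η ^ k} :=
    (hf.continuousOn.abs.isOpen_inter_preimage hBo isOpen_Iio).measurableSet
  have line_bound (x : E) : volume {t : ℝ | x + t • v ∈ {x ∈ B | |f x| < c * η ^ k}} ≤
      ENNReal.ofReal ((2 ^ (k + 1) - 2) * η) := by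
    have convex_line : Convex ℝ {t : ℝ | x + t • v ∈ B} := by
      simpa [AffineMap.lineMap_apply, Set.preimage, add_comm] using
        hBc.affine_preimage (AffineMap.lineMap x (x + v) : ℝ →ᵃ[ℝ] E)
    have := volume_abs_lt_mul_pow_le (k := k)
      (F := fun i t ↦ iteratedFDeriv ℝ i f (x + t • v) fun _ ↦ v) convex_line hc hη
      (fun i hi t ht ↦ (hasDerivAt_iteratedFDeriv_add_smul ((hf.contDiffAt
        (hBo.mem_nhds ht)).of_le (by exact_mod_cast hi))).hasDerivWithinAt)
      (fun t ht ↦ hk _ ht)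
    simpa only [iteratedFDeriv_zero_apply, Set.mem_ofPred_eq] using this
  calc μ {x ∈ B | |f x| < c * η ^ k}
      ≤ ENNReal.ofReal ((2 ^ (k + 1) - 2) * η) *
          μ (Metric.cthickening ‖v‖ {x ∈ B | |f x| < c * η ^ k}) :=
        measure_le_mul_measure_cthickening measurable_sublevel line_bound
    _ ≤ ENNReal.ofReal ((2 ^ (k + 1) - 2) * η) * μ (Metric.cthickening ‖v‖ B) := by
        gcongr
        exact Metric.cthickening_subset_of_subset _ (Set.sep_subset _ _)

end SublevelEstimate

section LogIntegrability

variable {α : Type*} [MeasurableSpace α] {μ ν : Measure α} {f h : α → ℝ}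

/-- Power-law decay of the measure of the sublevel sets `{|h| < s}` as `s → 0`. The bound
`C * s ^ (1 / k)` is written with `s = c * η ^ k`, so that it makes sense for `k = 0`, where it says
that `c ≤ |h|` almost everywhere. -/
def HasSublevelDecay (μ : Measure α) (h : α → ℝ) : Prop :=
  ∃ c > 0, ∃ k : ℕ, ∃ C ≠ ⊤, ∀ η > 0, μ {x | |h x| < c * η ^ k} ≤ C * ENNReal.ofReal η

namespace HasSublevelDecay

lemma mono_measure (hh : HasSublevelDecay μ h) (hνμ : ν ≤ μ) : HasSublevelDecay ν h := by
  obtain ⟨c, hc, k, C, hC, decay⟩ := hh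
  exact ⟨c, hc, k, C, hC, fun η hη ↦ (hνμ _).trans (decay η hη)⟩

lemma mono_abs (hf : HasSublevelDecay μ f) (hfh : ∀ x, |f x| ≤ |h x|) : HasSublevelDecay μ h := by
  obtain ⟨c, hc, k, C, hC, decay⟩ := hf
  exact ⟨c, hc, k, C, hC, fun η hη ↦
    (measure_mono fun x hx ↦ (hfh x).trans_lt hx).trans (decay η hη)⟩

end HasSublevelDecay

lemma integrable_of_measure_lt_le_exp_neg (hf₀ : 0 ≤ᵐ[μ] f) (hf : AEMeasurable f μ)
    {C : ENNReal} (hC : C ≠ ⊤)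
    (htail : ∀ t > 0, μ {x | t < f x} ≤ C * ENNReal.ofReal (Real.exp (-t))) : Integrable f μ := by
  refine ⟨hf.aestronglyMeasurable, (hasFiniteIntegral_iff_ofReal hf₀).2 ?_⟩
  calc ∫⁻ x, ENNReal.ofReal (f x) ∂μ = ∫⁻ t in Set.Ioi 0, μ {x | t < f x} :=
        lintegral_eq_lintegral_meas_lt μ hf₀ hf
    _ ≤ ∫⁻ t in Set.Ioi 0, C * ENNReal.ofReal (Real.exp (-t)) :=
        setLIntegral_mono' measurableSet_Ioi htail
    _ = C * ∫⁻ t in Set.Ioi 0, ENNReal.ofReal (Real.exp (-t)) := lintegral_const_mul' _ _ hC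
    _ < ⊤ := ENNReal.mul_lt_top hC.lt_top (integrableOn_exp_neg_Ioi 0).lintegral_lt_top

open Real in
lemma abs_lt_mul_exp_neg_of_lt_posLog_div {c y s : ℝ} (hc : 0 < c) (hs : 0 < s)
    (h : s < log⁺ (c / y)) : |y| < c * exp (-s) := by
  have lt_log : s < log |c / y| := by
    rw [log_abs]
    exact (lt_max_iff.1 h).resolve_left hs.not_gt
  have hy : y ≠ 0 := by
    rintro rfl
    simp only [div_zero, abs_zero, log_zero] at lt_log
    exact hs.not_gt lt_log
  rw [lt_log_iff_exp_lt (by positivity), abs_div, abs_of_pos hc,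
    lt_div_iff₀' (abs_pos.2 hy)] at lt_log
  rwa [exp_neg, ← div_eq_mul_inv, lt_div_iff₀ (exp_pos s)]

open Real in
lemma integrable_posLog_div {c : ℝ} (hc : 0 < c) {k : ℕ} {C : ENNReal} (hC : C ≠ ⊤)
    (decay : ∀ η > 0, μ {x | |h x| < c * η ^ k} ≤ C * ENNReal.ofReal η) (hh : AEMeasurable h μ) :
    Integrable (fun x ↦ log⁺ (c / h x)) μ := by
  -- Dividing by `k + 1` rather than `k` keeps the case `k = 0` inside the general argument.
  have integrable_div : Integrable (fun x ↦ log⁺ (c / h x) / (k + 1)) μ := by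
    refine integrable_of_measure_lt_le_exp_neg (ae_of_all _ fun x ↦ ?_)
      ((continuous_posLog.measurable.comp_aemeasurable (hh.const_div c)).div_const _) hC
      fun t ht ↦ (measure_mono fun x hx ↦ ?_).trans (decay (exp (-t)) (exp_pos _))
    · exact div_nonneg posLog_nonneg (by positivity)
    · rw [Set.mem_ofPred_eq, lt_div_iff₀ (by positivity)] at hx
      calc |h x| < c * exp (-(t * (k + 1))) :=
            abs_lt_mul_exp_neg_of_lt_posLog_div hc (by positivity) hx
        _ ≤ c * exp (-t) ^ k := by
            rw [← exp_nat_mul]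
            gcongr
            linarith
  simpa [div_mul_cancel₀ _ (k.cast_add_one_ne_zero (R := ℝ))] using integrable_div.mul_const (k + 1)

open Real in
lemma abs_log_le_add_posLog_div {c y M : ℝ} (hc : 0 < c) (hy : |y| ≤ M) :
    |log y| ≤ |log c| + log⁺ M + log⁺ (c / y) := by
  rcases eq_or_ne y 0 with rfl | hy₀
  · simpa using add_nonneg (abs_nonneg (log c)) posLog_nonneg
  have upper : log y ≤ log⁺ M :=
    (le_max_right _ _).trans ((posLog_abs y).symm.trans_le (posLog_le_posLog (abs_nonneg y) hy))
  have lower : log c - log y ≤ log⁺ (c / y) := by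
    rw [← log_div hc.ne' hy₀]
    exact le_max_right _ _
  rw [abs_le]
  constructor <;>
  linarith [neg_abs_le (log c), abs_nonneg (log c), posLog_nonneg (x := M),
    posLog_nonneg (x := c / y)]

theorem HasSublevelDecay.integrable_log [IsFiniteMeasure μ] (hdecay : HasSublevelDecay μ h)
    (hh : AEMeasurable h μ) {M : ℝ} (hM : ∀ᵐ x ∂μ, |h x| ≤ M) :
    Integrable (fun x ↦ Real.log (h x)) μ := by
  obtain ⟨c, hc, k, C, hC, decay⟩ := hdecay
  refine ((integrable_const (|Real.log c| + Real.posLog M)).add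
    (integrable_posLog_div hc hC decay hh)).mono' hh.log.aestronglyMeasurable ?_
  filter_upwards [hM] with x hx
  exact abs_log_le_add_posLog_div hc hx

theorem HasSublevelDecay.integrableAtFilter_log {X : Type*} [TopologicalSpace X] [MeasurableSpace X]
    [OpensMeasurableSpace X] {μ : Measure X} [IsLocallyFiniteMeasure μ] {u : X → ℝ} {x₀ : X}
    {V : Set X} (hdecay : HasSublevelDecay (μ.restrict V) u)
    (hu : ∀ᶠ x in 𝓝 x₀, ContinuousAt u x) (hV : V ∈ 𝓝 x₀) :
    IntegrableAtFilter (fun x ↦ Real.log (u x)) (𝓝 x₀) μ := by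
  have bounded : ∀ᶠ x in 𝓝 x₀, |u x| ≤ |u x₀| + 1 :=
    hu.self_of_nhds.abs.eventually_le_const (lt_add_one _)
  obtain ⟨N, hN, hμN⟩ := μ.finiteAt_nhds x₀
  obtain ⟨W, hW, hWo, hx₀W⟩ := eventually_nhds_iff.1 (hu.and (bounded.and (inter_mem hV hN)))
  have hcont : ContinuousOn u W := fun x hx ↦ (hW x hx).1.continuousWithinAt
  have : IsFiniteMeasure (μ.restrict W) :=
    isFiniteMeasure_restrict.2 ((measure_mono fun x hx ↦ (hW x hx).2.2.2).trans_lt hμN).ne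
  have hdecay_W := hdecay.mono_measure (Measure.restrict_mono (fun x hx ↦ (hW x hx).2.2.1) le_rfl)
  exact ⟨W, hWo.mem_nhds hx₀W, hdecay_W.integrable_log (hcont.aemeasurable hWo.measurableSet)
    (ae_restrict_of_forall_mem hWo.measurableSet fun x hx ↦ (hW x hx).2.1)⟩

end LogIntegrability

section Analytic

variable {E F : Type*} [NormedAddCommGroup E] [NormedSpace ℝ E]
  [NormedAddCommGroup F] [NormedSpace ℝ F]

lemma exists_iteratedFDeriv_ne_zero_of_analyticAt [CompleteSpace F] {f : E → F} {x₀ : E}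
    (hf : AnalyticAt ℝ f x₀) (hf₀ : ¬ f =ᶠ[𝓝 x₀] 0) :
    ∃ (n : ℕ) (v : E), iteratedFDeriv ℝ n f x₀ (fun _ ↦ v) ≠ 0 := by
  contrapose! hf₀
  obtain ⟨p, r, hp⟩ := hf
  filter_upwards [Metric.eball_mem_nhds x₀ hp.r_pos] with x hx
  have hsum := hp.hasSum_iteratedFDeriv (y := x - x₀)
    (by simpa only [Metric.mem_eball, edist_eq_enorm_sub, sub_zero] using hx)
  simp only [hf₀, smul_zero, add_sub_cancel] at hsum
  exact hsum.unique hasSum_zero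

variable [MeasurableSpace E] [BorelSpace E] [FiniteDimensional ℝ E]
  (μ : Measure E) [μ.IsAddHaarMeasure]

theorem exists_mem_nhds_hasSublevelDecay {f : E → ℝ} {x₀ : E}
    (hf : AnalyticAt ℝ f x₀) (hf₀ : ¬ f =ᶠ[𝓝 x₀] 0) :
    ∃ V ∈ 𝓝 x₀, HasSublevelDecay (μ.restrict V) f := by
  obtain ⟨k, v, hkv⟩ := exists_iteratedFDeriv_ne_zero_of_analyticAt hf hf₀
  wlog hpos : 0 < iteratedFDeriv ℝ k f x₀ fun _ ↦ v generalizing f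
  · obtain ⟨V, hV, hdecay⟩ := this hf.neg
      (fun h ↦ hf₀ (h.mono fun x hx ↦ neg_eq_zero.1 hx)) (by simpa [iteratedFDeriv_neg] using hkv)
      (by simpa [iteratedFDeriv_neg] using (not_lt.1 hpos).lt_of_ne hkv)
    exact ⟨V, hV, hdecay.mono_abs fun x ↦ (abs_neg (f x)).le⟩
  obtain ⟨c, hc, hck⟩ := exists_between hpos
  have continuousAt : ContinuousAt (fun x ↦ iteratedFDeriv ℝ k f x fun _ ↦ v) x₀ :=
    ((hf.contDiffAt (n := ⊤)).differentiableAt_iteratedFDeriv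
      (WithTop.coe_lt_top _)).continuousMultilinear_apply_const _ |>.continuousAt
  obtain ⟨r, hr, hball⟩ := Metric.eventually_nhds_iff_ball.1
    (hf.eventually_analyticAt.and (continuousAt.eventually_const_lt hck))
  refine ⟨Metric.ball x₀ r, Metric.ball_mem_nhds x₀ hr, c, hc, k,
    ENNReal.ofReal (2 ^ (k + 1) - 2) * μ (Metric.cthickening ‖v‖ (Metric.ball x₀ r)), ?_, ?_⟩
  · exact ENNReal.mul_ne_top ENNReal.ofReal_ne_top
      Metric.isBounded_ball.cthickening.measure_lt_top.ne
  · intro η hη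
    have hfB : ContDiffOn ℝ k f (Metric.ball x₀ r) := fun x hx ↦
      (hball x hx).1.contDiffAt.contDiffWithinAt
    rw [Measure.restrict_apply' measurableSet_ball, Set.inter_comm, mul_right_comm,
      ← ENNReal.ofReal_mul' hη.le]
    exact measure_abs_lt_mul_pow_le Metric.isOpen_ball (convex_ball x₀ r) hfB hc hη
      fun x hx ↦ (hball x hx).2.le

theorem stmt_17_general {U : Set E} (hU : IsPreconnected U) {g : E → F} (hg : AnalyticOnNhd ℝ g U)
    (hg_ne : ∃ x ∈ U, g x ≠ 0) :
    ∀ x₀ ∈ U, IntegrableAtFilter (fun x ↦ Real.log ‖g x‖) (𝓝 x₀) μ := by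
  intro x₀ hx₀
  obtain ⟨y, hyU, hgy⟩ := hg_ne
  obtain ⟨φ, hφ, hφy⟩ := exists_dual_vector'' ℝ (g y)
  have hf : AnalyticOnNhd ℝ (φ ∘ g) U := fun x hx ↦ (φ.analyticAt _).comp (hg x hx)
  have hf₀ : ¬ φ ∘ g =ᶠ[𝓝 x₀] 0 := fun h ↦ norm_ne_zero_iff.2 hgy <|
    hφy.symm.trans (hf.eqOn_zero_of_preconnected_of_eventuallyEq_zero hU hx₀ h hyU)
  have hfg : ∀ x, |(φ ∘ g) x| ≤ |‖g x‖| := fun x ↦ by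
    simpa using φ.le_of_opNorm_le hφ (g x)
  obtain ⟨V, hV, hdecay⟩ := exists_mem_nhds_hasSublevelDecay μ (hf x₀ hx₀) hf₀
  exact (hdecay.mono_abs hfg).integrableAtFilter_log
    ((hg x₀ hx₀).eventually_continuousAt.mono fun x hx ↦ hx.norm) hV

end Analytic

/-- If `U ⊆ ℝ^ℓ` is open and connected and `g : U → ℂ` is real analytic
and not identically zero, then `ln|g|` is locally Lebesgue integrable on `U`: every point
`x₀ ∈ U` has a neighborhood `V ⊆ U` with `∫_V |ln|g(x)|| dx < ∞`. -/
theorem stmt_17 {ℓ : ℕ} (U : Set (EuclideanSpace ℝ (Fin ℓ)))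
    (hU_open : IsOpen U) (hU_conn : IsConnected U)
    (g : EuclideanSpace ℝ (Fin ℓ) → ℂ)
    (hg_an : ∀ x ∈ U, AnalyticAt ℝ g x)
    (hg_ne : ∃ x ∈ U, g x ≠ 0) :
    ∀ x₀ ∈ U, ∃ V : Set (EuclideanSpace ℝ (Fin ℓ)),
      V ⊆ U ∧ V ∈ 𝓝 x₀ ∧
      IntegrableOn (fun x => |Real.log ‖g x‖|) V volume := by
  intro x₀ hx₀
  obtain ⟨V, hV, hint⟩ := stmt_17_general volume hU_conn.isPreconnected hg_an hg_ne x₀ hx₀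
  exact ⟨V ∩ U, Set.inter_subset_right, inter_mem hV (hU_open.mem_nhds hx₀),
    (hint.mono_set Set.inter_subset_left).abs⟩
end
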